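/- arXiv:1408.2618 — 3 statements merged into one kernel-verified Lean document; each statement's English description precedes it below -/
import Mathlib

section
/- Let R be a commutative Noetherian ring, I an ideal of R[X] containing a monic polynomial, and P = Q ⊕ R a finitely generated projective R-module of constant rank r with r ≥ dim(R[X]/I) + 2. Then every R[X]/I-linear surjection φ : (P ⊗_R R[X])/I(P ⊗_R R[X]) ↠ I/I² can be lifted to an R[X]-linear surjection Φ : P ⊗_R R[X] ↠ I. -/
open TensorProduct

noncomputable section


theorem aux_dim_le (R S E : Type*) [CommRing R] [CommRing S] [CommRing E] [Algebra R S]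
    [Algebra R E] [Algebra.IsIntegral R S] [Algebra.IsIntegral R E]
    (h : RingHom.ker (algebraMap R S) ≤ RingHom.ker (algebraMap R E)) :
    ringKrullDim E ≤ ringKrullDim S := by
  refine iSup_le fun p => ?_
  have hmono : StrictMono (PrimeSpectrum.comap (algebraMap R E)) := by
    intro a b hab
    exact Ideal.IsIntegral.comap_lt_comap (R := R) (I := a.asIdeal) (J := b.asIdeal) hab
  let l := p.map _ hmono
  have hle : (⊥ : Ideal S).comap (algebraMap R S) ≤ l.head.asIdeal := by
    intro x hx
    have hx' : x ∈ RingHom.ker (algebraMap R E) := h hx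
    have : l.head = PrimeSpectrum.comap (algebraMap R E) p.head := rfl
    rw [this]
    change algebraMap R E x ∈ p.head.asIdeal
    rw [RingHom.mem_ker] at hx'
    rw [hx']; exact Ideal.zero_mem _
  obtain ⟨P, -, hP, hPc⟩ := Ideal.exists_ideal_over_prime_of_isIntegral l.head.asIdeal ⊥ hle
  have : P.LiesOver l.head.asIdeal := ⟨hPc.symm⟩
  obtain ⟨L, hL, -⟩ := Ideal.exists_ltSeries_of_hasGoingUp l P
  have : p.length = L.length := by rw [hL]; rfl
  rw [this]
  exact le_iSup (fun q : LTSeries (PrimeSpectrum S) => (q.length : WithBot ℕ∞)) L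

/-- prime avoidance in a coset, for an antichain of primes -/
theorem aux_avoid {E : Type*} [CommRing E] (S : Set (Ideal E)) (hS : S.Finite)
    (hprime : ∀ p ∈ S, p.IsPrime) (hanti : ∀ p ∈ S, ∀ q ∈ S, p ≤ q → p = q)
    (𝔠 : Ideal E) (hc : ∀ p ∈ S, ¬ 𝔠 ≤ p) (a : E) :
    ∃ c ∈ 𝔠, ∀ p ∈ S, a + c ∉ p := by
  classical
  let S0 : Set (Ideal E) := {p ∈ S | a ∉ p}
  let S1 : Set (Ideal E) := {p ∈ S | a ∈ p}
  have hS0 : S0.Finite := hS.subset fun p hp => hp.1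
  have hS1 : S1.Finite := hS.subset fun p hp => hp.1
  let K : Ideal E := 𝔠 * ∏ p ∈ hS0.toFinset, p
  have hK : ¬ ((K : Set E) ⊆ ⋃ p ∈ S1, (p : Set E)) := by
    intro h
    obtain ⟨p, hp, hKp⟩ := (Ideal.subset_union_prime_finite hS1 (f := fun p : Ideal E => p) ⊤ ⊤
      (fun p hp _ _ => hprime p hp.1)).1 h
    have := hprime p hp.1
    rcases (Ideal.IsPrime.mul_le this).1 hKp with h1 | h1
    · exact hc p hp.1 h1
    · rw [Ideal.IsPrime.prod_le this] at h1
      obtain ⟨q, hq, hqp⟩ := h1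
      rw [Set.Finite.mem_toFinset] at hq
      have := hanti q hq.1 p hp.1 hqp
      subst this
      exact hq.2 hp.2
  rw [Set.not_subset] at hK
  obtain ⟨c, hcK, hcn⟩ := hK
  refine ⟨c, (Ideal.mul_le_left : 𝔠 * ∏ p ∈ hS0.toFinset, p ≤ 𝔠) hcK, fun p hp hmem => ?_⟩
  by_cases ha : a ∈ p
  · apply hcn
    rw [Set.mem_iUnion₂]
    exact ⟨p, ⟨hp, ha⟩, by simpa using (Ideal.add_mem_iff_right p ha).1 hmem⟩
  · have : c ∈ p := by
      have h1 : c ∈ ∏ p ∈ hS0.toFinset, p :=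
        (Ideal.mul_le_right : 𝔠 * ∏ p ∈ hS0.toFinset, p ≤ _) hcK
      have h2 := Ideal.prod_le_inf h1
      exact (Finset.inf_le (f := id) (hS0.mem_toFinset.2 ⟨hp, ha⟩) : _ ≤ id p) h2
    exact ha ((Ideal.add_mem_iff_left p this).1 hmem)

/-- free case of general position -/
theorem aux_free {E : Type*} [CommRing E] [IsNoetherianRing E] (𝔠 : Ideal E) (a : ℕ → E) (m : ℕ) :
    ∃ c : ℕ → E, (∀ i, c i ∈ 𝔠) ∧ ∀ p : Ideal E, p.IsPrime → ¬ 𝔠 ≤ p →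
      (∀ i < m, a i + c i ∈ p) → (m : ℕ∞) ≤ p.height := by
  classical
  induction m with
  | zero => exact ⟨0, fun i => 𝔠.zero_mem, fun p _ _ _ => by simp⟩
  | succ m ih =>
    obtain ⟨c, hc, hh⟩ := ih
    let O : Ideal E := Ideal.span ((fun i => a i + c i) '' {i | i < m})
    let S : Set (Ideal E) := {p ∈ O.minimalPrimes | ¬ 𝔠 ≤ p}
    obtain ⟨d, hd, hd2⟩ := aux_avoid S
      ((Ideal.finite_minimalPrimes_of_isNoetherianRing E O).subset fun p hp => hp.1)
      (fun p hp => hp.1.1.1)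
      (fun p hp q hq hpq => le_antisymm hpq (hq.1.2 hp.1.1 hpq)) 𝔠 (fun p hp => hp.2) (a m)
    refine ⟨Function.update c m d, fun i => ?_, fun p hp hcp hmem => ?_⟩
    · by_cases h : i = m
      · subst h; simpa using hd
      · simpa [h] using hc i
    · have hO : O ≤ p := by
        rw [Ideal.span_le]
        rintro _ ⟨i, hi, rfl⟩
        have hi' : i < m := hi
        have := hmem i (by omega)
        rwa [Function.update_of_ne (by omega)] at this
      obtain ⟨q, hq, hqp⟩ := Ideal.exists_minimalPrimes_le hO
      have hqc : ¬ 𝔠 ≤ q := fun h => hcp (h.trans hqp)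
      have : q.IsPrime := hq.1.1
      have hqh : (m : ℕ∞) ≤ q.height := hh q hq.1.1 hqc fun i hi =>
        hq.1.2 (Ideal.subset_span ⟨i, hi, rfl⟩)
      have hm := hmem m (by omega)
      rw [Function.update_self] at hm
      have hlt : q < p := lt_of_le_of_ne hqp fun h => hd2 q ⟨hq, hqc⟩ (h ▸ hm)
      have := Ideal.height_add_one_le_of_lt_of_isPrime hlt
      push_cast
      exact (add_le_add_left hqh 1).trans this

/-- general position -/
theorem aux_gp {R E Q : Type*} [CommRing R] [CommRing E] [IsNoetherianRing E] [Algebra R E]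
    [AddCommGroup Q] [Module R Q] (m : ℕ) (hdim : ∀ p : Ideal E, p.IsPrime → p.height < m)
    (hQ : ∀ p : Ideal R, p.IsPrime → ∃ f ∉ p, ∃ x : ℕ → (Q →ₗ[R] R), ∃ y : ℕ → Q,
      ∀ i < m, ∀ j < m, x i (y j) = if i = j then f else 0)
    (𝔟 : Ideal E) (q : Q →ₗ[R] E) :
    ∃ c : Q →ₗ[R] E, (∀ y, c y ∈ 𝔟) ∧ ∀ p : Ideal E, p.IsPrime → ¬ 𝔟 ≤ p → ∃ y, q y + c y ∉ p := by
  suffices h : ∀ K : Ideal E, ∃ c : Q →ₗ[R] E, (∀ y, c y ∈ 𝔟) ∧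
      ∀ p : Ideal E, p.IsPrime → K ≤ p → ¬ 𝔟 ≤ p → ∃ y, q y + c y ∉ p by
    obtain ⟨c, hc, h⟩ := h ⊥
    exact ⟨c, hc, fun p hp => h p hp bot_le⟩
  intro K
  induction K using IsNoetherian.induction with
  | hgt K ih =>
    by_cases hK : K = ⊤
    · refine ⟨0, fun y => by simp, fun p hp hKp => ?_⟩
      exact absurd (top_le_iff.1 (hK ▸ hKp)) hp.ne_top
    obtain ⟨𝔪, hm, hKm⟩ := Ideal.exists_le_maximal K hK
    have := hm.isPrime
    obtain ⟨f, hf, x, y, hxy⟩ := hQ (𝔪.comap (algebraMap R E)) (Ideal.comap_isPrime _ _)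
    let F : E := algebraMap R E f
    have hF : F ∉ 𝔪 := hf
    have hlt : K < K ⊔ Ideal.span {F} := by
      refine lt_of_le_of_ne le_sup_left fun h => hF (hKm ?_)
      rw [h]; exact Ideal.mem_sup_right (Ideal.mem_span_singleton_self _)
    obtain ⟨c0, hc0, h0⟩ := ih _ hlt
    obtain ⟨d, hd, h1⟩ := aux_free (Ideal.span {F} * (Ideal.span {F} * 𝔟))
      (fun j => q (y j) + c0 (y j)) m
    have hd' : ∀ i, ∃ e ∈ Ideal.span {F} * 𝔟, F * e = d i := fun i =>
      Ideal.mem_span_singleton_mul.1 (hd i)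
    choose e he hed using hd'
    refine ⟨c0 + ∑ i ∈ Finset.range m, e i • ((Algebra.linearMap R E) ∘ₗ x i), fun z => ?_,
      fun p hp hKp hbp => ?_⟩
    · simp only [LinearMap.add_apply, LinearMap.sum_apply, LinearMap.smul_apply, smul_eq_mul]
      refine 𝔟.add_mem (hc0 z) (Ideal.sum_mem _ fun i _ => Ideal.mul_mem_right _ _ ?_)
      exact (Ideal.mul_le_right : Ideal.span {F} * 𝔟 ≤ 𝔟) (he i)
    · by_cases hFp : F ∈ p
      · obtain ⟨z, hz⟩ := h0 p hp (sup_le hKp ((Ideal.span_singleton_le_iff_mem p).2 hFp)) hbp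
        refine ⟨z, fun h => hz ?_⟩
        simp only [LinearMap.add_apply, LinearMap.sum_apply, LinearMap.smul_apply, smul_eq_mul] at h
        rw [← add_assoc] at h
        refine (Ideal.add_mem_iff_left p ?_).1 h
        refine Ideal.sum_mem _ fun i _ => Ideal.mul_mem_right _ _ ?_
        exact ((Ideal.span_singleton_le_iff_mem p).2 hFp) ((Ideal.mul_le_left : Ideal.span {F} * 𝔟 ≤ _) (he i))
      · by_contra! hall
        have hsub : ¬ Ideal.span {F} * (Ideal.span {F} * 𝔟) ≤ p := by
          rw [hp.mul_le, hp.mul_le, Ideal.span_singleton_le_iff_mem]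
          tauto
        refine absurd (h1 p hp hsub fun j hj => ?_) (not_le.2 (hdim p hp))
        have := hall (y j)
        simp only [LinearMap.add_apply, LinearMap.sum_apply, LinearMap.smul_apply, smul_eq_mul,
          LinearMap.comp_apply, Algebra.linearMap_apply] at this
        rw [Finset.sum_eq_single j, hxy j hj j hj, if_pos rfl, ← add_assoc] at this
        · rw [← hed, mul_comm F]; exact this
        · intro i hi hij
          rw [hxy i (Finset.mem_range.1 hi) j hj, if_neg hij, map_zero, mul_zero]
        · intro h; exact absurd (Finset.mem_range.2 hj) h

/-- local dual systems -/
theorem aux_dual {R Q : Type*} [CommRing R] [AddCommGroup Q] [Module R Q]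
    [Module.Finite R Q] [Module.Projective R Q] (p : PrimeSpectrum R) (m : ℕ)
    (hm : Module.rankAtStalk (R := R) Q p = m) :
    ∃ f ∉ p.asIdeal, ∃ x : ℕ → (Q →ₗ[R] R), ∃ y : ℕ → Q,
      ∀ i < m, ∀ j < m, x i (y j) = if i = j then f else 0 := by
  classical
  let S := p.asIdeal.primeCompl
  let Rp := Localization.AtPrime p.asIdeal
  let Qp := LocalizedModule S Q
  have : Module.FinitePresentation R Q := Module.finitePresentation_of_projective R Q
  have : Module.Free Rp Qp := Module.free_of_flat_of_isLocalRing
  let b : Module.Basis (Fin m) Rp Qp := Module.finBasisOfFinrankEq Rp Qp hm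
  -- lift basis vectors
  have hy : ∀ i : Fin m, ∃ y : Q, ∃ s : S, s • b i = LocalizedModule.mkLinearMap S Q y := by
    intro i
    obtain ⟨⟨y, s⟩, h⟩ := IsLocalizedModule.surj S (LocalizedModule.mkLinearMap S Q) (b i)
    exact ⟨y, s, h⟩
  choose y s hys using hy
  have hx : ∀ i : Fin m, ∃ x : Q →ₗ[R] R, ∃ t : S, Algebra.linearMap R Rp ∘ₗ x =
      t • ((b.coord i).restrictScalars R ∘ₗ LocalizedModule.mkLinearMap S Q) := fun i =>
    Module.FinitePresentation.exists_lift_of_isLocalizedModule S (Algebra.linearMap R Rp) _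
  choose x t hxt using hx
  have key : ∀ i j : Fin m, algebraMap R Rp (x i (y j)) =
      algebraMap R Rp (if i = j then (t i : R) * s j else 0) := by
    intro i j
    have := LinearMap.congr_fun (hxt i) (y j)
    simp only [LinearMap.comp_apply, Algebra.linearMap_apply, LinearMap.smul_apply,
      LinearMap.restrictScalars_apply, ← hys] at this
    rw [this]
    rw [Submonoid.smul_def, Submonoid.smul_def, (b.coord i).map_smul_of_tower]
    rw [Module.Basis.coord_apply, Module.Basis.repr_self, Finsupp.single_apply]
    by_cases hij : i = j
    · subst hij; simp [Algebra.smul_def]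
    · rw [if_neg hij, if_neg (Ne.symm hij)]; simp
  have key2 : ∀ i j : Fin m, ∃ u : S, (u : R) * x i (y j) =
      u * (if i = j then (t i : R) * s j else 0) := fun i j =>
    (IsLocalization.eq_iff_exists S Rp).1 (key i j)
  choose u hu using key2
  let U : S := ∏ i, ∏ j, u i j
  have hU : ∀ i j : Fin m, (U : R) * x i (y j) = U * (if i = j then (t i : R) * s j else 0) := by
    intro i j
    have hdvd : (u i j) ∣ U :=
      (Finset.dvd_prod_of_mem (fun j => u i j) (Finset.mem_univ j)).trans
        (Finset.dvd_prod_of_mem (fun i => ∏ j, u i j) (Finset.mem_univ i))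
    obtain ⟨v, hv⟩ := hdvd
    rw [hv]; push_cast
    rw [mul_comm (u i j : R), mul_assoc, hu, mul_assoc]
  let T : S := ∏ i, t i * s i
  have hT : ∀ i, ∃ v : R, t i * s i * v = T := by
    intro i
    obtain ⟨v, hv⟩ := Finset.dvd_prod_of_mem (fun i => t i * s i) (Finset.mem_univ i)
    refine ⟨v, ?_⟩
    change _ = ((∏ i, t i * s i : S) : R)
    rw [hv]; push_cast; rfl
  choose v hv using hT
  refine ⟨(U * T : S), (U * T).2,
    fun i => if h : i < m then ((U : R) * v ⟨i, h⟩) • x ⟨i, h⟩ else 0,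
    fun j => if h : j < m then y ⟨j, h⟩ else 0, fun i hi j hj => ?_⟩
  simp only [hi, hj, dif_pos, LinearMap.smul_apply, smul_eq_mul]
  rw [mul_right_comm, hU]
  by_cases hij : i = j
  · subst hij
    simp only [if_true]
    push_cast
    rw [← hv ⟨i, hi⟩]; ring
  · rw [if_neg (by simpa using hij), if_neg hij]; ring


/-- homogenize in degree `d` and substitute `[tX + (1-t) : t]`. -/
def auxH {R : Type*} [CommRing R] (t : R) (d : ℕ) : Polynomial R →ₗ[R] Polynomial R :=
  ∑ k ∈ Finset.range (d + 1),
    (LinearMap.toSpanSingleton R (Polynomial R)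
      ((Polynomial.C t * Polynomial.X + Polynomial.C (1 - t)) ^ k * Polynomial.C t ^ (d - k))) ∘ₗ
        Polynomial.lcoeff R k

open Polynomial in
theorem auxH_apply {R : Type*} [CommRing R] (t : R) (d : ℕ) (a : Polynomial R) :
    auxH t d a = ∑ k ∈ Finset.range (d + 1),
      C (a.coeff k) * ((C t * X + C (1 - t)) ^ k * C t ^ (d - k)) := by
  simp [auxH, LinearMap.sum_apply, Polynomial.smul_eq_C_mul]

open Polynomial in
theorem auxH_monomial {R : Type*} [CommRing R] (t : R) (d n : ℕ) (r : R) (h : n ≤ d) :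
    auxH t d (C r * X ^ n) = C r * ((C t * X + C (1 - t)) ^ n * C t ^ (d - n)) := by
  rw [auxH_apply, Finset.sum_eq_single n]
  · simp
  · intro b _ hb
    simp [coeff_X_pow, hb]
  · intro h'
    exact absurd (Finset.mem_range.2 (by omega)) h'

open Polynomial in
theorem auxH_mul {R : Type*} [CommRing R] (t : R) (d e : ℕ) (a b : Polynomial R)
    (ha : a.natDegree ≤ d) (hb : b.natDegree ≤ e) :
    auxH t (d + e) (a * b) = auxH t d a * auxH t e b := by
  revert a
  refine induction_with_natDegree_le _ d (by simp) ?_ ?_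
  · intro n r _ hn
    revert b
    refine induction_with_natDegree_le _ e (by simp) ?_ ?_
    · intro k s _ hk
      have h1 : C r * X ^ n * (C s * X ^ k) = C (r * s) * X ^ (n + k) := by
        rw [C_mul, pow_add]; ring
      rw [h1, auxH_monomial _ _ _ _ (by omega), auxH_monomial _ _ _ _ hn,
        auxH_monomial _ _ _ _ hk, C_mul, pow_add,
        show d + e - (n + k) = (d - n) + (e - k) by omega, pow_add]
      ring
    · intro f g _ _ hf hg
      rw [mul_add, map_add, hf, hg, map_add, mul_add]
  · intro f g _ _ hf hg
    rw [add_mul, map_add, hf, hg, map_add, add_mul]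

open Polynomial in
theorem auxH_sub {R : Type*} [CommRing R] (t : R) (d : ℕ) (a : Polynomial R)
    (ha : a.natDegree ≤ d) : auxH t d a - a ∈ Ideal.span {C (1 - t)} := by
  revert a
  refine induction_with_natDegree_le _ d (by simp) ?_ ?_
  · intro n r _ hn
    rw [auxH_monomial _ _ _ _ hn, ← Ideal.Quotient.eq]
    have h1 : Ideal.Quotient.mk (Ideal.span {C (1 - t)}) (C (1 - t)) = 0 :=
      Ideal.Quotient.eq_zero_iff_mem.2 (Ideal.mem_span_singleton_self _)
    have h2 : Ideal.Quotient.mk (Ideal.span {C (1 - t)}) (C t) = 1 := by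
      rw [← map_one (Ideal.Quotient.mk (Ideal.span {C (1 - t)})), Ideal.Quotient.eq]
      have : C t - 1 = -(C (1 - t)) := by simp
      rw [this]
      exact neg_mem (Ideal.mem_span_singleton_self _)
    simp only [map_mul, map_pow, map_add, h1, h2]
    simp
  · intro f g _ _ hf hg
    rw [map_add, add_sub_add_comm]
    exact Ideal.add_mem _ hf hg

open Polynomial in
theorem auxH_monic {R : Type*} [CommRing R] (t : R) (f : Polynomial R) (hf : f.Monic) :
    auxH t f.natDegree f - 1 ∈ Ideal.span {C t} := by
  rw [auxH_apply, Finset.sum_range_succ, ← Ideal.Quotient.eq]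
  have h1 : Ideal.Quotient.mk (Ideal.span {C t}) (C t) = 0 :=
    Ideal.Quotient.eq_zero_iff_mem.2 (Ideal.mem_span_singleton_self _)
  rw [map_add, map_sum, Finset.sum_eq_zero]
  · simp only [hf.coeff_natDegree, map_mul, map_pow, map_add, h1, map_sub]
    simp
  · intro k hk
    have : f.natDegree - k ≠ 0 := by have := Finset.mem_range.1 hk; omega
    simp [h1, this]

open Polynomial in
/-- division by a monic polynomial as a linear map -/
def auxDiv {R : Type*} [CommRing R] (f : R[X]) (hf : f.Monic) : R[X] →ₗ[R] R[X] where
  toFun a := a /ₘ f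
  map_add' a b := by
    nontriviality R
    refine (div_modByMonic_unique (a /ₘ f + b /ₘ f) (a %ₘ f + b %ₘ f) hf ⟨?_, ?_⟩).1
    · conv_rhs => rw [← modByMonic_add_div a f, ← modByMonic_add_div b f]
      ring
    · exact (degree_add_le _ _).trans_lt
        (max_lt (degree_modByMonic_lt _ hf) (degree_modByMonic_lt _ hf))
  map_smul' r a := by
    nontriviality R
    refine (div_modByMonic_unique (r • (a /ₘ f)) (r • (a %ₘ f)) hf ⟨?_, ?_⟩).1
    · conv_rhs => rw [← modByMonic_add_div a f]
      rw [smul_add, mul_smul_comm]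
    · exact (degree_smul_le _ _).trans_lt (degree_modByMonic_lt _ hf)

open Polynomial in
theorem aux_core {R Q : Type*} [CommRing R] [AddCommGroup Q] [Module R Q] (I : Ideal R[X])
    (f0 : Q →ₗ[R] R[X]) (f1 : R[X]) (hmon : f1.Monic) (hf0 : ∀ x, f0 x ∈ I) (hf1 : f1 ∈ I)
    (t : R) (ht : 1 - t ∈ (I.comap C) ^ 2)
    (hN : ∀ a ∈ I, C t * a ∈ Ideal.span (Set.range f0 ∪ {f1})) :
    ∃ (Φ0 : Q →ₗ[R] R[X]) (Φ1 : R[X]), (∀ x, Φ0 x - f0 x ∈ I ^ 2) ∧ Φ1 - f1 ∈ I ^ 2 ∧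
      Ideal.span (Set.range Φ0 ∪ {Φ1}) = I := by
  nontriviality R
  set d := f1.natDegree with hd
  set J := I.comap C with hJ
  have hJ2 : (J ^ 2).map C ≤ I ^ 2 := by
    rw [Ideal.map_pow]
    exact Ideal.pow_right_mono Ideal.map_comap_le 2
  have htI : C (1 - t) ∈ (J ^ 2).map C := Ideal.mem_map_of_mem C ht
  have hspan : Ideal.span {C (1 - t)} ≤ (J ^ 2).map C :=
    (Ideal.span_singleton_le_iff_mem _).2 htI
  let Φ1 := auxH t d f1
  let g0 : Q →ₗ[R] R[X] := modByMonicHom f1 ∘ₗ f0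
  have hg0 : ∀ x, (g0 x).natDegree ≤ d := fun x =>
    natDegree_le_natDegree (degree_modByMonic_lt (f0 x) hmon).le
  let Φ0 : Q →ₗ[R] R[X] := auxH t d ∘ₗ g0 + LinearMap.mulLeft R Φ1 ∘ₗ auxDiv f1 hmon ∘ₗ f0
  have hΦ0 : ∀ x, Φ0 x = auxH t d (g0 x) + Φ1 * (f0 x /ₘ f1) := fun x => rfl
  have hdiv : ∀ x, f0 x = g0 x + f1 * (f0 x /ₘ f1) := fun x => (modByMonic_add_div (f0 x) f1).symm
  have e1 : Φ1 - f1 ∈ (J ^ 2).map C := hspan (auxH_sub t d f1 le_rfl)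
  have e0 : ∀ x, Φ0 x - f0 x ∈ (J ^ 2).map C := by
    intro x
    have h1 := hspan (auxH_sub t d (g0 x) (hg0 x))
    have : Φ0 x - f0 x = (auxH t d (g0 x) - g0 x) + (Φ1 - f1) * (f0 x /ₘ f1) := by
      rw [hΦ0]
      conv_lhs => rw [hdiv x]
      conv_rhs => rw [sub_mul]
      have h2 : (g0 x + f1 * (f0 x /ₘ f1)) /ₘ f1 = f0 x /ₘ f1 := by rw [← hdiv x]
      rw [h2]; ring
    rw [this]
    exact Ideal.add_mem _ h1 (Ideal.mul_mem_right _ _ e1)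
  refine ⟨Φ0, Φ1, fun x => hJ2 (e0 x), hJ2 e1, ?_⟩
  set I0 := Ideal.span (Set.range Φ0 ∪ {Φ1}) with hI0
  have hII : I ^ 2 ≤ I := Ideal.pow_le_self (by norm_num)
  have hΦ1m : Φ1 ∈ I0 := Ideal.subset_span (Or.inr rfl)
  have hΦ0m : ∀ x, Φ0 x ∈ I0 := fun x => Ideal.subset_span (Or.inl ⟨x, rfl⟩)
  have hHg : ∀ x, auxH t d (g0 x) ∈ I0 := by
    intro x
    have : auxH t d (g0 x) = Φ0 x - Φ1 * (f0 x /ₘ f1) := by rw [hΦ0]; ring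
    rw [this]
    exact Ideal.sub_mem _ (hΦ0m x) (Ideal.mul_mem_right _ _ hΦ1m)
  -- the homogenizations of elements of N land in I0
  have hN' : ∀ a ∈ Ideal.span (Set.range g0 ∪ {f1}), ∃ e0, ∀ e ≥ e0,
      a.natDegree ≤ e ∧ auxH t e a ∈ I0 := by
    intro a ha
    induction ha using Submodule.span_induction with
    | mem a ha =>
      have hh : a.natDegree ≤ d ∧ auxH t d a ∈ I0 := by
        rcases ha with ⟨x, rfl⟩ | h
        · exact ⟨hg0 x, hHg x⟩
        · rw [Set.mem_singleton_iff] at h; subst h; exact ⟨le_rfl, hΦ1m⟩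
      refine ⟨d, fun e he => ⟨hh.1.trans he, ?_⟩⟩
      have := auxH_mul t d (e - d) a 1 hh.1 (by simp)
      rw [mul_one, Nat.add_sub_cancel' he] at this
      rw [this]; exact Ideal.mul_mem_right _ _ hh.2
    | zero => exact ⟨0, fun e _ => by simp⟩
    | add a b _ _ iha ihb =>
      obtain ⟨e1, h1⟩ := iha
      obtain ⟨e2, h2⟩ := ihb
      refine ⟨max e1 e2, fun e he => ?_⟩
      have h1 := h1 e (le_trans (le_max_left _ _) he)
      have h2 := h2 e (le_trans (le_max_right _ _) he)
      refine ⟨(natDegree_add_le _ _).trans (max_le h1.1 h2.1), ?_⟩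
      rw [map_add]; exact Ideal.add_mem _ h1.2 h2.2
    | smul b a _ iha =>
      obtain ⟨e1, h1⟩ := iha
      refine ⟨e1 + b.natDegree, fun e he => ?_⟩
      have h1 := h1 (e - b.natDegree) (by omega)
      rw [smul_eq_mul]
      refine ⟨natDegree_mul_le.trans (by omega), ?_⟩
      have := auxH_mul t b.natDegree (e - b.natDegree) b a le_rfl h1.1
      rw [Nat.add_sub_cancel' (by omega)] at this
      rw [this]; exact Ideal.mul_mem_left _ _ h1.2
  have hNN : Ideal.span (Set.range f0 ∪ {f1}) ≤ Ideal.span (Set.range g0 ∪ {f1}) := by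
    rw [Ideal.span_le]
    have h1 : f1 ∈ Ideal.span (Set.range g0 ∪ {f1}) := Ideal.subset_span (Or.inr rfl)
    rintro a (⟨x, rfl⟩ | h)
    · rw [SetLike.mem_coe, hdiv x]
      exact Ideal.add_mem _ (Ideal.subset_span (Or.inl ⟨x, rfl⟩)) (Ideal.mul_mem_right _ _ h1)
    · rw [Set.mem_singleton_iff] at h; subst h; exact h1
  -- comaximality with powers of t
  have hcop : ∀ n : ℕ, I0 ⊔ Ideal.span {C t ^ n} = ⊤ := by
    intro n
    rw [← Ideal.span_singleton_pow]
    refine Ideal.sup_pow_eq_top ?_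
    rw [Ideal.eq_top_iff_one]
    have := auxH_monic t f1 hmon
    have h2 : (1 : R[X]) = Φ1 - (Φ1 - 1) := by ring
    rw [h2]
    exact Ideal.sub_mem _ (Ideal.mem_sup_left hΦ1m) (Ideal.mem_sup_right this)
  have hJI0 : J.map C ≤ I0 := by
    rw [Ideal.map_le_iff_le_comap]
    intro j hj
    rw [Ideal.mem_comap]
    have hjI : C j ∈ I := hj
    obtain ⟨e, he⟩ := hN' _ (hNN (hN _ hjI))
    have h1 := (he e le_rfl).2
    have h3 : auxH t e (C t * C j) = C t ^ (e + 1) * C j := by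
      have := auxH_monomial t e 0 (t * j) (by omega)
      rw [pow_zero, mul_one, C_mul] at this
      rw [this, pow_succ]; simp; ring
    rw [h3] at h1
    have h4 : (1 : R[X]) ∈ I0 ⊔ Ideal.span {C t ^ (e + 1)} := by rw [hcop]; trivial
    obtain ⟨a, ha, b, hb, hab⟩ := Submodule.mem_sup.1 h4
    obtain ⟨c, rfl⟩ := Ideal.mem_span_singleton.1 hb
    have : C j = a * C j + c * (C t ^ (e + 1) * C j) := by
      calc C j = 1 * C j := by ring
        _ = _ := by rw [← hab]; ring
    rw [this]
    exact Ideal.add_mem _ (Ideal.mul_mem_right _ _ ha) (Ideal.mul_mem_left _ _ h1)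
  have hJJ : (J ^ 2).map C ≤ I0 :=
    (Ideal.map_mono (Ideal.pow_le_self (by norm_num))).trans hJI0
  apply le_antisymm
  · rw [hI0, Ideal.span_le]
    rintro a (⟨x, rfl⟩ | h)
    · have := Ideal.add_mem _ (hII (hJ2 (e0 x))) (hf0 x)
      simpa using this
    · rw [Set.mem_singleton_iff] at h; subst h
      have := Ideal.add_mem _ (hII (hJ2 e1)) hf1
      simpa using this
  · have hNI : Ideal.span (Set.range f0 ∪ {f1}) ≤ I0 := by
      rw [Ideal.span_le]
      rintro a (⟨x, rfl⟩ | h)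
      · have := Ideal.sub_mem _ (hΦ0m x) (hJJ (e0 x))
        simpa using this
      · rw [Set.mem_singleton_iff] at h; subst h
        have := Ideal.sub_mem _ hΦ1m (hJJ e1)
        simpa using this
    intro a ha
    have : a = C t * a + C (1 - t) * a := by rw [← add_mul, ← C_add]; simp
    rw [this]
    exact Ideal.add_mem _ (hNI (hN a ha)) (Ideal.mul_mem_right _ _ (hJJ htI))

open Polynomial in
theorem aux_nak {R : Type*} [CommRing R] [IsNoetherianRing R] (I N : Ideal R[X])
    (f1 : R[X]) (hmon : f1.Monic) (hf1 : f1 ∈ N) (K : Ideal R)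
    (hI : I ≤ N ⊔ K.map C * I) : ∃ t : R, 1 - t ∈ K ∧ ∀ a ∈ I, C t * a ∈ N := by
  have hfin0 : Module.Finite R (R[X] ⧸ Ideal.span {f1}) := hmon.finite_quotient
  have hle : Ideal.span {f1} ≤ N := (Ideal.span_singleton_le_iff_mem _).2 hf1
  have hfin : Module.Finite R (R[X] ⧸ N) :=
    Module.Finite.of_surjective (Ideal.Quotient.factorₐ R hle).toLinearMap
      (Ideal.Quotient.factor_surjective hle)
  have hnoeth : IsNoetherian R (R[X] ⧸ N) := isNoetherian_of_isNoetherianRing_of_finite R _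
  let π : R[X] →ₗ[R] R[X] ⧸ N := (Ideal.Quotient.mkₐ R N).toLinearMap
  have hπ : ∀ a, π a = Ideal.Quotient.mk N a := fun a => rfl
  let M : Submodule R (R[X] ⧸ N) := (I.restrictScalars R).map π
  have hM : M.FG := IsNoetherian.noetherian M
  have key : ∀ u ∈ K.map (C : R →+* R[X]), ∀ i ∈ I, π (u * i) ∈ K • M := by
    intro u hu
    induction hu using Submodule.span_induction with
    | mem u hu =>
      obtain ⟨j, hj, rfl⟩ := hu
      intro i hi
      have : π (C j * i) = j • π i := by rw [← map_smul, Polynomial.smul_eq_C_mul]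
      rw [this]
      exact Submodule.smul_mem_smul hj ⟨i, hi, rfl⟩
    | zero => intro i _; simp
    | add a b _ _ ha hb =>
      intro i hi
      rw [add_mul, map_add]
      exact add_mem (ha i hi) (hb i hi)
    | smul a u _ hu =>
      intro i hi
      have : a • u * i = u * (a * i) := by rw [smul_eq_mul]; ring
      rw [this]
      exact hu _ (Ideal.mul_mem_left _ _ hi)
  have key2 : ∀ b ∈ K.map (C : R →+* R[X]) * I, π b ∈ K • M := by
    intro b hb
    refine Submodule.mul_induction_on hb key ?_
    intro x y hx hy
    rw [map_add]; exact add_mem hx hy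
  have hMM : M ≤ K • M := by
    rintro _ ⟨a, ha, rfl⟩
    obtain ⟨n, hn, b, hb, rfl⟩ := Submodule.mem_sup.1 (hI ha)
    have h0 : π n = 0 := Ideal.Quotient.eq_zero_iff_mem.2 hn
    rw [map_add, h0, zero_add]
    exact key2 b hb
  obtain ⟨t, ht, ht2⟩ := Submodule.exists_sub_one_mem_and_smul_eq_zero_of_fg_of_le_smul K M hM hMM
  refine ⟨t, ?_, ?_⟩
  · rw [← neg_sub]; exact neg_mem ht
  · intro a ha
    have h1 := ht2 (π a) ⟨a, ha, rfl⟩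
    rw [← map_smul, Polynomial.smul_eq_C_mul] at h1
    exact Ideal.Quotient.eq_zero_iff_mem.1 h1

theorem aux_pow {A : Type*} [CommRing A] [IsNoetherianRing A] (I O : Ideal A)
    (h1 : I ≤ O ⊔ I ^ 2) (h2 : ∀ p : Ideal A, p.IsPrime → O ≤ p → I ≤ p) : I ≤ O := by
  have hrad : I ≤ O.radical := by
    rw [Ideal.radical_eq_sInf]
    exact le_sInf fun p hp => h2 p hp.2 hp.1
  obtain ⟨k, hk⟩ := Ideal.exists_pow_le_of_le_radical_of_fg hrad (IsNoetherian.noetherian I)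
  have h3 : ∀ n : ℕ, I ≤ O ⊔ I ^ (n + 1) := by
    intro n
    induction n with
    | zero => simp
    | succ n ih =>
      refine ih.trans (sup_le le_sup_left ?_)
      rw [pow_succ']
      refine (Ideal.mul_mono_left h1).trans ?_
      rw [Ideal.sup_mul]
      refine sup_le (Ideal.mul_le_left.trans le_sup_left) ?_
      rw [← pow_add, show 2 + n = n + 1 + 1 by omega]
      exact le_sup_right
  refine (h3 k).trans (sup_le le_rfl ((Ideal.pow_le_pow_right (Nat.le_succ k)).trans hk))

open Polynomial in
theorem aux_pos {R Q : Type*} [CommRing R] [IsNoetherianRing R]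
    [AddCommGroup Q] [Module R Q] [Module.Finite R Q] [Module.Projective R Q] (I : Ideal R[X])
    (m : ℕ) (hm : ∀ p : PrimeSpectrum R, Module.rankAtStalk (R := R) Q p = m)
    (hr : ringKrullDim (R[X] ⧸ I) + 2 ≤ ((m + 1 : ℕ) : WithBot ℕ∞))
    (f0 : Q →ₗ[R] R[X]) (f1 : R[X]) (hmon : f1.Monic) (hf1 : f1 ∈ I) :
    ∃ f0' : Q →ₗ[R] R[X], (∀ x, f0' x - f0 x ∈ I ^ 2) ∧
      ∀ p : Ideal R[X], p.IsPrime →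
        Ideal.span (Set.range f0' ∪ {f1}) ⊔ (I.comap C).map C ≤ p → I ≤ p := by
  set J := I.comap C with hJ
  let L : Ideal R[X] := Ideal.span {f1} ⊔ J.map C
  have hfin0 : Module.Finite R (R[X] ⧸ Ideal.span {f1}) := hmon.finite_quotient
  have hle : Ideal.span {f1} ≤ L := le_sup_left
  have hle' : Ideal.span {f1} ≤ I := (Ideal.span_singleton_le_iff_mem _).2 hf1
  have hfinL : Module.Finite R (R[X] ⧸ L) :=
    Module.Finite.of_surjective (Ideal.Quotient.factorₐ R hle).toLinearMap
      (Ideal.Quotient.factor_surjective hle)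
  have hfinI : Module.Finite R (R[X] ⧸ I) :=
    Module.Finite.of_surjective (Ideal.Quotient.factorₐ R hle').toLinearMap
      (Ideal.Quotient.factor_surjective hle')
  have hdimle : ringKrullDim (R[X] ⧸ L) ≤ ringKrullDim (R[X] ⧸ I) := by
    refine aux_dim_le R _ _ ?_
    intro x hx
    rw [RingHom.mem_ker] at hx ⊢
    have hx' : C x ∈ I := Ideal.Quotient.eq_zero_iff_mem.1 hx
    have : C x ∈ L := le_sup_right (a := Ideal.span {f1}) (Ideal.mem_map_of_mem C hx')
    exact Ideal.Quotient.eq_zero_iff_mem.2 this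
  let π : R[X] →ₗ[R] R[X] ⧸ L := (Ideal.Quotient.mkₐ R L).toLinearMap
  have hsurj : Function.Surjective (Ideal.Quotient.mk L) := Ideal.Quotient.mk_surjective
  have hheight : ∀ p : Ideal (R[X] ⧸ L), p.IsPrime → p.height < m := by
    intro p hp
    have h1 := (Ideal.height_le_ringKrullDim_of_ne_top hp.ne_top).trans hdimle
    have h2 : ((p.height : ℕ∞) : WithBot ℕ∞) + 2 ≤ ((m + 1 : ℕ) : WithBot ℕ∞) :=
      (add_le_add_left h1 2).trans hr
    have h3 : p.height + 2 ≤ ((m + 1 : ℕ) : ℕ∞) := by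
      rw [← WithBot.coe_le_coe]
      exact h2
    have h4 : p.height ≠ ⊤ := by
      intro h; rw [h] at h3; simp at h3
    obtain ⟨n, hn⟩ := ENat.ne_top_iff_exists.1 h4
    rw [← hn] at h3 ⊢
    have h5 : n + 2 ≤ m + 1 := by exact_mod_cast h3
    exact_mod_cast (show n < m by omega)
  obtain ⟨c, hc, hcp⟩ := aux_gp (R := R) (E := R[X] ⧸ L) (Q := Q) m hheight
    (fun p hp => aux_dual ⟨p, hp⟩ m (hm _)) ((I ^ 2).map (Ideal.Quotient.mk L)) (π ∘ₗ f0)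
  let M : Submodule R R[X] := (I ^ 2).restrictScalars R
  have hc' : ∀ y, c y ∈ M.map π := by
    intro y
    obtain ⟨x, hx, hxy⟩ := (Ideal.mem_map_iff_of_surjective _ hsurj).1 (hc y)
    exact ⟨x, hx, hxy⟩
  obtain ⟨l, hl⟩ := Module.projective_lifting_property (π.submoduleMap M)
    (c.codRestrict _ hc') (π.submoduleMap_surjective M)
  have hl' : ∀ y, π (l y : R[X]) = c y := by
    intro y
    have := congrArg Subtype.val (LinearMap.congr_fun hl y)
    simpa using this
  refine ⟨f0 + M.subtype ∘ₗ l, ?_, ?_⟩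
  · intro x
    have : (f0 + M.subtype ∘ₗ l) x - f0 x = (l x : R[X]) := by simp
    rw [this]; exact (l x).2
  · intro P hP hOP
    have hLP : L ≤ P := by
      refine le_trans (sup_le ?_ le_sup_right) hOP
      exact (Ideal.span_mono Set.subset_union_right).trans le_sup_left
    have hker : RingHom.ker (Ideal.Quotient.mk L) ≤ P := by rw [Ideal.mk_ker]; exact hLP
    have hpp : (P.map (Ideal.Quotient.mk L)).IsPrime :=
      Ideal.map_isPrime_of_surjective hsurj hker
    have hcomap : ∀ a, Ideal.Quotient.mk L a ∈ P.map (Ideal.Quotient.mk L) → a ∈ P := by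
      intro a ha
      have h1 : a ∈ (P.map (Ideal.Quotient.mk L)).comap (Ideal.Quotient.mk L) := ha
      rw [Ideal.comap_map_of_surjective' _ hsurj, sup_eq_left.2 hker] at h1
      exact h1
    have hb : (I ^ 2).map (Ideal.Quotient.mk L) ≤ P.map (Ideal.Quotient.mk L) := by
      by_contra hcon
      obtain ⟨y, hy⟩ := hcp _ hpp hcon
      apply hy
      have h1 : (f0 + M.subtype ∘ₗ l) y ∈ P :=
        hOP (Ideal.mem_sup_left (Ideal.subset_span (Or.inl ⟨y, rfl⟩)))
      have h2 := Ideal.mem_map_of_mem (Ideal.Quotient.mk L) h1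
      have h3 : (π ∘ₗ f0) y + c y = Ideal.Quotient.mk L ((f0 + M.subtype ∘ₗ l) y) := by
        rw [← hl' y, LinearMap.comp_apply, ← map_add]; rfl
      rw [h3]; exact h2
    have h2 : I ^ 2 ≤ P := fun a ha => hcomap a (hb (Ideal.mem_map_of_mem _ ha))
    exact hP.le_of_pow_le h2

open Polynomial in
theorem aux_main {R Q : Type*} [CommRing R] [IsNoetherianRing R] [Nontrivial R]
    [AddCommGroup Q] [Module R Q] [Module.Finite R Q] [Module.Projective R Q] (I : Ideal R[X])
    (g : R[X]) (hg : g.Monic) (hgI : g ∈ I)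
    (m : ℕ) (hm : ∀ p : PrimeSpectrum R, Module.rankAtStalk (R := R) Q p = m)
    (hr : ringKrullDim (R[X] ⧸ I) + 2 ≤ ((m + 1 : ℕ) : WithBot ℕ∞))
    (f0 : Q →ₗ[R] R[X]) (h : R[X]) (hf0 : ∀ x, f0 x ∈ I) (hh : h ∈ I)
    (hspan : I ≤ Ideal.span (Set.range f0 ∪ {h}) ⊔ I ^ 2) :
    ∃ (Φ0 : Q →ₗ[R] R[X]) (Φ1 : R[X]), (∀ x, Φ0 x - f0 x ∈ I ^ 2) ∧ Φ1 - h ∈ I ^ 2 ∧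
      Ideal.span (Set.range Φ0 ∪ {Φ1}) = I := by
  have hII : I ^ 2 ≤ I := Ideal.pow_le_self (by norm_num)
  -- make the last coordinate monic
  obtain ⟨f1, hmon, hf1h⟩ : ∃ f1 : R[X], f1.Monic ∧ f1 - h ∈ I ^ 2 := by
    let k := h.natDegree + 2
    have hXg : (X * g).Monic := monic_X.mul hg
    have hd : (X * g).natDegree = 1 + g.natDegree := by
      rw [monic_X.natDegree_mul hg, natDegree_X]
    refine ⟨(X * g) ^ k + h, (hXg.pow k).add_of_left ?_, ?_⟩
    · apply degree_lt_degree
      rw [hXg.natDegree_pow, hd]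
      simp only [k]
      nlinarith [Nat.zero_le g.natDegree, Nat.zero_le h.natDegree]
    · rw [add_sub_cancel_right]
      exact Ideal.pow_le_pow_right (by simp [k])
        (Ideal.pow_mem_pow (Ideal.mul_mem_left _ _ hgI) k)
  have hf1 : f1 ∈ I := by
    have := Ideal.add_mem _ (hII hf1h) hh
    simpa using this
  obtain ⟨f0', hf0', hprime⟩ := aux_pos I m hm hr f0 f1 hmon hf1
  have hf0I : ∀ x, f0' x ∈ I := by
    intro x
    have := Ideal.add_mem _ (hII (hf0' x)) (hf0 x)
    simpa using this
  set N := Ideal.span (Set.range f0' ∪ {f1}) with hN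
  have hf1N : f1 ∈ N := Ideal.subset_span (Or.inr rfl)
  have hf0N : ∀ x, f0' x ∈ N := fun x => Ideal.subset_span (Or.inl ⟨x, rfl⟩)
  have hI1 : I ≤ N ⊔ I ^ 2 := by
    refine hspan.trans (sup_le ?_ le_sup_right)
    rw [Ideal.span_le]
    rintro a (⟨x, rfl⟩ | ha)
    · have := Ideal.sub_mem (N ⊔ I ^ 2) (Ideal.mem_sup_left (hf0N x))
        (Ideal.mem_sup_right (hf0' x))
      simpa using this
    · rw [Set.mem_singleton_iff] at ha; subst ha
      have := Ideal.sub_mem (N ⊔ I ^ 2) (Ideal.mem_sup_left hf1N) (Ideal.mem_sup_right hf1h)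
      simpa using this
  have hI2 : I ≤ N ⊔ (I.comap C).map C := by
    refine aux_pow I _ (hI1.trans (sup_le_sup_right le_sup_left _)) hprime
  have hI3 : I ≤ N ⊔ (I.comap C).map C * I := by
    refine hI1.trans (sup_le le_sup_left ?_)
    rw [pow_two]
    refine (Ideal.mul_mono_left hI2).trans ?_
    rw [Ideal.sup_mul]
    exact sup_le_sup_right Ideal.mul_le_left _
  have hI4 : I ≤ N ⊔ ((I.comap C) ^ 2).map C * I := by
    refine hI3.trans (sup_le le_sup_left ?_)
    refine (Ideal.mul_mono_right hI3).trans ?_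
    rw [Ideal.mul_sup, ← mul_assoc, ← pow_two, ← Ideal.map_pow]
    exact sup_le_sup_right Ideal.mul_le_right _
  obtain ⟨t, ht, htN⟩ := aux_nak I N f1 hmon hf1N _ hI4
  obtain ⟨Φ0, Φ1, h0, h1, h2⟩ := aux_core I f0' f1 hmon hf0I hf1 t ht htN
  refine ⟨Φ0, Φ1, fun x => ?_, ?_, h2⟩
  · have := Ideal.add_mem _ (h0 x) (hf0' x)
    simpa using this
  · have := Ideal.add_mem _ h1 hf1h
    simpa using this

/-- **Theorem (Bhatwadekar–Raja Sridharan).** Let `R` be a commutative Noetherian ring,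
`I` an ideal of `R[X]` containing a monic polynomial and `P = Q ⊕ R` a finitely generated
projective `R`-module of constant rank `r` with `r ≥ dim (R[X]/I) + 2`.  Then every
`R[X]`-linear surjection `φ : P ⊗_R R[X] ↠ I/I²` (equivalently, a surjection
`(P ⊗ R[X])/I(P ⊗ R[X]) ↠ I/I²`) lifts to an `R[X]`-linear surjection `Φ : P ⊗_R R[X] ↠ I`. -/
theorem surjection_onto_ideal_lifts_polynomial_ring
    (R : Type*) [CommRing R] [IsNoetherianRing R]
    (I : Ideal (Polynomial R))
    (hmonic : ∃ g : Polynomial R, g.Monic ∧ g ∈ I)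
    (P Q : Type*) [AddCommGroup P] [Module R P] [AddCommGroup Q] [Module R Q]
    (hPQ : Nonempty (P ≃ₗ[R] Q × R))
    [Module.Finite R P] [Module.Projective R P]
    (r : ℕ)
    (hrank : ∀ q : PrimeSpectrum R,
      Module.finrank (Localization.AtPrime q.asIdeal) (LocalizedModule q.asIdeal.primeCompl P)
        = r)
    (hr : ringKrullDim (Polynomial R ⧸ I) + 2 ≤ (r : ℕ))
    (φ : Polynomial R ⊗[R] P →ₗ[Polynomial R] I.Cotangent) (hφ : Function.Surjective φ) :
    ∃ Φ : Polynomial R ⊗[R] P →ₗ[Polynomial R] I,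
      Function.Surjective Φ ∧ I.toCotangent ∘ₗ Φ = φ := by
  obtain ⟨g, hg, hgI⟩ := hmonic
  obtain ⟨e⟩ := hPQ
  rcases subsingleton_or_nontrivial R with hR | hR
  · have h1 : Subsingleton I := inferInstance
    have h2 : Subsingleton I.Cotangent := I.toCotangent_surjective.subsingleton
    exact ⟨0, fun x => ⟨0, Subsingleton.elim _ _⟩, LinearMap.ext fun x => Subsingleton.elim _ _⟩
  have hQfin : Module.Finite R Q :=
    Module.Finite.of_surjective (LinearMap.fst R Q R ∘ₗ e.toLinearMap)
      ((LinearMap.fst_surjective (R := R) (M := Q) (M₂ := R)).comp e.surjective)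
  have hQproj : Module.Projective R Q :=
    Module.Projective.of_split (e.symm.toLinearMap ∘ₗ LinearMap.inl R Q R)
      (LinearMap.fst R Q R ∘ₗ e.toLinearMap) (by ext x; simp)
  have hrk : ∀ p : PrimeSpectrum R, Module.rankAtStalk (R := R) Q p + 1 = r := by
    intro p
    have h1 : Module.rankAtStalk (R := R) P p = r := hrank p
    rw [Module.rankAtStalk_eq_of_equiv e, Module.rankAtStalk_prod] at h1
    simpa using h1
  obtain ⟨p0⟩ : Nonempty (PrimeSpectrum R) := inferInstance
  obtain ⟨m, rfl⟩ : ∃ m, r = m + 1 := ⟨_, (hrk p0).symm⟩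
  have hm : ∀ p : PrimeSpectrum R, Module.rankAtStalk (R := R) Q p = m := fun p => by
    have := hrk p; omega
  -- an initial linear lift
  let φ' : P →ₗ[R] I.Cotangent :=
    φ.restrictScalars R ∘ₗ TensorProduct.mk R (Polynomial R) P 1
  obtain ⟨F, hF⟩ := Module.projective_lifting_property (I.toCotangent.restrictScalars R) φ'
    I.toCotangent_surjective
  have hF' : ∀ x, I.toCotangent (F x) = φ (1 ⊗ₜ x) := fun x => LinearMap.congr_fun hF x
  let ι : I →ₗ[R] Polynomial R := I.subtype.restrictScalars R
  let G : Q × R →ₗ[R] Polynomial R := ι ∘ₗ F ∘ₗ e.symm.toLinearMap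
  let f0 : Q →ₗ[R] Polynomial R := G ∘ₗ LinearMap.inl R Q R
  let h : Polynomial R := G (0, 1)
  have hG : ∀ x, G x ∈ I := fun x => (F (e.symm x)).2
  have hGdec : ∀ x : Q × R, G x = f0 x.1 + x.2 • h := by
    intro x
    have : x = LinearMap.inl R Q R x.1 + x.2 • ((0, 1) : Q × R) := by
      ext <;> simp
    conv_lhs => rw [this, map_add, map_smul]
    rfl
  have hFG : ∀ x : P, (F x : Polynomial R) = f0 (e x).1 + (e x).2 • h := by
    intro x
    rw [← hGdec]
    simp [G, ι]
  have hspan : I ≤ Ideal.span (Set.range f0 ∪ {h}) ⊔ I ^ 2 := by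
    have key : ∀ z : Polynomial R ⊗[R] P, ∃ a : I, I.toCotangent a = φ z ∧
        (a : Polynomial R) ∈ Ideal.span (Set.range f0 ∪ {h}) := by
      intro z
      induction z using TensorProduct.induction_on with
      | zero => exact ⟨0, by simp, by simp⟩
      | tmul a x =>
        refine ⟨a • F x, ?_, ?_⟩
        · rw [map_smul, hF', ← map_smul, TensorProduct.smul_tmul', smul_eq_mul, mul_one]
        · rw [Submodule.coe_smul, smul_eq_mul, hFG, Polynomial.smul_eq_C_mul]
          refine Ideal.mul_mem_left _ _ (Ideal.add_mem _ (Ideal.subset_span (Or.inl ⟨_, rfl⟩))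
            (Ideal.mul_mem_left _ _ (Ideal.subset_span (Or.inr rfl))))
      | add x y hx hy =>
        obtain ⟨a, ha, ha'⟩ := hx
        obtain ⟨b, hb, hb'⟩ := hy
        exact ⟨a + b, by rw [map_add, map_add, ha, hb], Ideal.add_mem _ ha' hb'⟩
    intro a ha
    obtain ⟨z, hz⟩ := hφ (I.toCotangent ⟨a, ha⟩)
    obtain ⟨b, hb, hb'⟩ := key z
    rw [hz, eq_comm, Ideal.toCotangent_eq] at hb
    have h1 : a = (b : Polynomial R) + (a - b) := by ring
    rw [h1]
    exact Ideal.add_mem _ (Ideal.mem_sup_left hb') (Ideal.mem_sup_right hb)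
  obtain ⟨Φ0, Φ1, h0, h1, h2⟩ := aux_main I g hg hgI m hm hr f0 h (fun x => hG _) (hG _) hspan
  have hΦ0 : ∀ x, Φ0 x ∈ I := fun x =>
    h2.le (Ideal.subset_span (Or.inl ⟨x, rfl⟩))
  have hΦ1 : Φ1 ∈ I := h2.le (Ideal.subset_span (Or.inr rfl))
  let Ψ' : P →ₗ[R] Polynomial R :=
    (LinearMap.coprod Φ0 (LinearMap.toSpanSingleton R (Polynomial R) Φ1)) ∘ₗ e.toLinearMap
  have hΨ' : ∀ x, Ψ' x = Φ0 (e x).1 + (e x).2 • Φ1 := fun x => by simp [Ψ']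
  have hΨI : ∀ x, Ψ' x ∈ I.restrictScalars R := fun x => by
    rw [hΨ', Polynomial.smul_eq_C_mul]
    exact Ideal.add_mem _ (hΦ0 _) (Ideal.mul_mem_left _ _ hΦ1)
  let Ψ : P →ₗ[R] I := Ψ'.codRestrict (I.restrictScalars R) hΨI
  have hΨ : ∀ x, (Ψ x : Polynomial R) = Φ0 (e x).1 + (e x).2 • Φ1 := hΨ'
  let Φ : Polynomial R ⊗[R] P →ₗ[Polynomial R] I := LinearMap.liftBaseChange (Polynomial R) Ψ
  have hΦ : ∀ x, Φ (1 ⊗ₜ x) = Ψ x := fun x => by simp [Φ]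
  refine ⟨Φ, ?_, ?_⟩
  · have hle : I ≤ (LinearMap.range Φ).map I.subtype := by
      conv_lhs => rw [← h2]
      rw [Ideal.span_le]
      rintro a (⟨x, rfl⟩ | ha)
      · refine ⟨Φ (1 ⊗ₜ e.symm (x, 0)), ⟨_, rfl⟩, ?_⟩
        rw [hΦ, Submodule.subtype_apply, hΨ]; simp
      · rw [Set.mem_singleton_iff] at ha; subst ha
        refine ⟨Φ (1 ⊗ₜ e.symm (0, 1)), ⟨_, rfl⟩, ?_⟩
        rw [hΦ, Submodule.subtype_apply, hΨ]; simp
    rintro ⟨a, ha⟩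
    obtain ⟨_, ⟨z, rfl⟩, hb⟩ := hle ha
    exact ⟨z, Subtype.ext hb⟩
  · refine TensorProduct.AlgebraTensorModule.curry_injective ?_
    refine LinearMap.ext_ring ?_
    ext x
    change I.toCotangent (Φ (1 ⊗ₜ x)) = φ (1 ⊗ₜ x)
    rw [hΦ, ← hF', Ideal.toCotangent_eq, hΨ, hFG]
    have : Φ0 (e x).1 + (e x).2 • Φ1 - (f0 (e x).1 + (e x).2 • h) =
        (Φ0 (e x).1 - f0 (e x).1) + Polynomial.C (e x).2 * (Φ1 - h) := by
      rw [Polynomial.smul_eq_C_mul, Polynomial.smul_eq_C_mul]; ring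
    rw [this]
    exact Ideal.add_mem _ (h0 _) (Ideal.mul_mem_left _ _ h1)
end
end

section
/- Let R be a commutative Noetherian ring and I a locally complete intersection ideal of R of height n ≥ 2 with dim(R/I) ≤ 1. Then there exists a locally complete intersection ideal J ⊆ R of height n such that (i) √I = √J and (ii) J/J² is a free R/J-module of rank n. -/
noncomputable section

/-- The height of an ideal: the infimum of the heights of the prime ideals containing it. -/
def idealHeight {A : Type*} [CommRing A] (I : Ideal A) : ℕ∞ :=
  ⨅ (p : PrimeSpectrum A) (_ : I ≤ p.asIdeal), Order.height p

/-- `a : Fin k → A` is a regular sequence: each `a i` is a nonzerodivisor modulo the ideal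
generated by the previous terms. -/
def IsRegularSeq {A : Type*} [CommRing A] {k : ℕ} (a : Fin k → A) : Prop :=
  ∀ (i : Fin k) (x : A),
    a i * x ∈ Ideal.span {y | ∃ j < i, a j = y} → x ∈ Ideal.span {y | ∃ j < i, a j = y}

/-- An ideal `I` of `A` is a locally complete intersection ideal of height `k` if
`ht I = k` and for every prime `p ⊇ I` the ideal `I A_p` is generated by a regular
sequence of length `k`. -/
def IsLocallyCompleteIntersection {A : Type*} [CommRing A] (I : Ideal A) (k : ℕ) : Prop :=
  idealHeight I = k ∧
  ∀ p : PrimeSpectrum A, I ≤ p.asIdeal →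
    ∃ a : Fin k → Localization.AtPrime p.asIdeal,
      IsRegularSeq a ∧
      Ideal.span (Set.range a)
        = I.map (algebraMap A (Localization.AtPrime p.asIdeal))


namespace FS

section A
variable {R M : Type*} [CommRing R] [AddCommGroup M] [Module R M]

def InZ (N : Submodule R M) (p : Ideal R) (x : M) : Prop :=
  ∃ s, s ∉ p ∧ s • x ∈ N ⊔ p • (⊤ : Submodule R M)

def LG (N : Submodule R M) (k : ℕ) (p : Ideal R) : Prop :=
  ∃ S : Finset M, S.card ≤ k ∧ ∃ s, s ∉ p ∧ ∀ x : M, s • x ∈ N ⊔ Submodule.span R (S : Set M)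

lemma InZ.mono {N N' : Submodule R M} (h : N ≤ N') {p : Ideal R} {x : M} (hx : InZ N p x) :
    InZ N' p x := by
  obtain ⟨s, hs, h1⟩ := hx
  exact ⟨s, hs, sup_le_sup_right h _ h1⟩

lemma InZ.add {N : Submodule R M} {p : Ideal R} [p.IsPrime] {x y : M} (hx : InZ N p x)
    (hy : InZ N p y) : InZ N p (x + y) := by
  obtain ⟨s, hs, h1⟩ := hx
  obtain ⟨t, ht, h2⟩ := hy
  refine ⟨s * t, fun h => (Ideal.IsPrime.mem_or_mem ‹_› h).elim hs ht, ?_⟩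
  rw [smul_add]
  refine add_mem ?_ ?_
  · rw [mul_comm, mul_smul]; exact Submodule.smul_mem _ _ h1
  · rw [mul_smul]; exact Submodule.smul_mem _ _ h2

lemma InZ.smul {N : Submodule R M} {p : Ideal R} {x : M} (r : R) (hx : InZ N p x) :
    InZ N p (r • x) := by
  obtain ⟨s, hs, h1⟩ := hx
  refine ⟨s, hs, ?_⟩
  rw [smul_comm]; exact Submodule.smul_mem _ _ h1

lemma InZ.of_smul {N : Submodule R M} {p : Ideal R} [p.IsPrime] {x : M} {r : R} (hr : r ∉ p)
    (hx : InZ N p (r • x)) : InZ N p x := by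
  obtain ⟨s, hs, h1⟩ := hx
  refine ⟨s * r, fun h => (Ideal.IsPrime.mem_or_mem ‹_› h).elim hs hr, ?_⟩
  rwa [mul_smul]

lemma InZ.of_mem {N : Submodule R M} {p : Ideal R} [p.IsPrime] {x : M} (hx : x ∈ N) :
    InZ N p x :=
  ⟨1, fun h => Ideal.IsPrime.ne_top ‹_› ((Ideal.eq_top_iff_one _).2 h),
    by rw [one_smul]; exact Submodule.mem_sup_left hx⟩

lemma InZ.of_mem_smul {N : Submodule R M} {p : Ideal R} [p.IsPrime] {r : R} (hr : r ∈ p) (x : M) :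
    InZ N p (r • x) :=
  ⟨1, fun h => Ideal.IsPrime.ne_top ‹_› ((Ideal.eq_top_iff_one _).2 h),
    by rw [one_smul]; exact Submodule.mem_sup_right (Submodule.smul_mem_smul hr trivial)⟩

/-- the submodule version -/
def Z (N : Submodule R M) (p : Ideal R) [p.IsPrime] : Submodule R M where
  carrier := {x | InZ N p x}
  add_mem' := InZ.add
  zero_mem' := InZ.of_mem (zero_mem _)
  smul_mem' r _ := InZ.smul r

lemma mem_Z {N : Submodule R M} {p : Ideal R} [p.IsPrime] {x : M} : x ∈ Z N p ↔ InZ N p x := Iff.rfl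

/-- a finite generation argument: common denominators -/
lemma common [Module.Finite R M] {p : Ideal R} [p.IsPrime] {K : Submodule R M}
    (h : ∀ x : M, ∃ s, s ∉ p ∧ s • x ∈ K) : ∃ s, s ∉ p ∧ ∀ x : M, s • x ∈ K := by
  classical
  obtain ⟨S, hS⟩ := Module.Finite.fg_top (R := R) (M := M)
  choose f hf hf' using h
  refine ⟨∏ x ∈ S, f x, ?_, fun x => ?_⟩
  · intro h
    obtain ⟨x, _, hx⟩ := (Ideal.IsPrime.prod_mem_iff).1 h
    exact hf x hx
  · have hx : x ∈ Submodule.span R (S : Set M) := by rw [hS]; trivial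
    induction hx using Submodule.span_induction with
    | mem x hx =>
      rw [← Finset.prod_erase_mul S f hx, mul_smul]
      exact Submodule.smul_mem _ _ (hf' x)
    | zero => simp
    | add x y _ _ hx hy => rw [smul_add]; exact add_mem hx hy
    | smul a x _ hx => rw [smul_comm]; exact Submodule.smul_mem _ _ hx

lemma nak [Module.Finite R M] {p : Ideal R} [p.IsPrime] {N : Submodule R M}
    (h : ∀ x : M, InZ N p x) : ∃ s, s ∉ p ∧ ∀ x : M, s • x ∈ N := by
  obtain ⟨s, hs, h1⟩ := common (p := p) h
  have := LinearMap.exists_monic_and_natDegree_eq_and_coeff_mem_pow_and_aeval_eq_zero R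
    (s • LinearMap.id : (M ⧸ N) →ₗ[R] (M ⧸ N)) p (by
      rintro _ ⟨x, rfl⟩
      obtain ⟨x, rfl⟩ := Submodule.Quotient.mk_surjective _ x
      have h2 : N.mkQ (s • x) ∈ (N ⊔ p • (⊤ : Submodule R M)).map N.mkQ := ⟨_, h1 x, rfl⟩
      rw [Submodule.map_sup, Submodule.map_smul'', Submodule.map_top, Submodule.range_mkQ,
        Submodule.mkQ_map_self, bot_sup_eq] at h2
      exact h2)
  obtain ⟨q, hq, -, hc, h0⟩ := this
  refine ⟨q.eval s, ?_, ?_⟩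
  · rw [Polynomial.eval_eq_sum_range, Finset.sum_range_succ]
    intro h2
    rw [Ideal.add_mem_iff_right] at h2
    · rw [hq.coeff_natDegree, one_mul] at h2
      exact hs (Ideal.IsPrime.mem_of_pow_mem ‹_› _ h2)
    · refine Ideal.sum_mem _ fun k hk => Ideal.mul_mem_right _ _ ?_
      refine (Ideal.pow_le_self ?_) (hc k)
      have := Finset.mem_range.1 hk
      omega
  · intro x
    have h3 : Polynomial.aeval (s • LinearMap.id : (M ⧸ N) →ₗ[R] (M ⧸ N)) q
        = (q.eval s) • LinearMap.id := by
      have : (s • LinearMap.id : (M ⧸ N) →ₗ[R] (M ⧸ N)) = algebraMap R (Module.End R (M ⧸ N)) s := by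
        ext; simp
      rw [this, Polynomial.aeval_algebraMap_apply]
      ext; simp
    rw [h3] at h0
    have := LinearMap.congr_fun h0 (N.mkQ x)
    simp only [LinearMap.smul_apply, LinearMap.id_apply, LinearMap.zero_apply] at this
    rw [← map_smul] at this
    exact (Submodule.Quotient.mk_eq_zero N).1 this

lemma LG.mono {N N' : Submodule R M} (h : N ≤ N') {k k' : ℕ} (hk : k ≤ k') {p : Ideal R}
    (hx : LG N k p) : LG N' k' p := by
  obtain ⟨S, h0, s, hs, h1⟩ := hx
  exact ⟨S, h0.trans hk, s, hs, fun x => sup_le_sup_right h _ (h1 x)⟩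

lemma LG.zero {N : Submodule R M} {p : Ideal R} :
    LG N 0 p ↔ ∃ s, s ∉ p ∧ ∀ x : M, s • x ∈ N := by
  constructor
  · rintro ⟨S, h0, s, hs, h1⟩
    have : S = ∅ := by simpa using h0
    subst this
    exact ⟨s, hs, by simpa using h1⟩
  · rintro ⟨s, hs, h1⟩
    exact ⟨∅, by simp, s, hs, by simpa using h1⟩

lemma LG.of_Z [Module.Finite R M] {N : Submodule R M} {k : ℕ} {p : Ideal R} [p.IsPrime]
    (S : Finset M) (hS : S.card ≤ k) (h : ∀ x : M, InZ (N ⊔ Submodule.span R (S : Set M)) p x) :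
    LG N k p := by
  obtain ⟨s, hs, h1⟩ := nak h
  exact ⟨S, hS, s, hs, h1⟩

/-- Exchange -/
lemma LG.exch {N : Submodule R M} {k : ℕ} {p : Ideal R} [p.IsPrime]
    (h : LG N k p) {x : M} (hx : ¬ InZ N p x) : LG (N ⊔ Submodule.span R {x}) (k - 1) p := by
  classical
  obtain ⟨S, h0, s, hs, h1⟩ := h
  obtain ⟨y, hy, z, hz, hyz⟩ := Submodule.mem_sup.1 (h1 x)
  obtain ⟨c, hc⟩ := Submodule.mem_span_finset'.1 hz
  by_cases hall : ∀ i, c i ∈ p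
  · exfalso
    apply hx
    refine ⟨s, hs, ?_⟩
    rw [← hyz, ← hc]
    refine add_mem (Submodule.mem_sup_left hy) (Submodule.mem_sup_right ?_)
    exact sum_mem fun i _ => Submodule.smul_mem_smul (hall i) trivial
  · push Not at hall
    obtain ⟨j, hj⟩ := hall
    refine ⟨S.erase j, ?_, c j * s, fun h => (Ideal.IsPrime.mem_or_mem ‹_› h).elim hj hs, ?_⟩
    · rw [Finset.card_erase_of_mem j.2]; omega
    · have key : ∀ w ∈ N ⊔ Submodule.span R (S : Set M), c j • w ∈
          N ⊔ Submodule.span R {x} ⊔ Submodule.span R ((S.erase (j : M) : Finset M) : Set M) := by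
        intro w hw
        have : N ⊔ Submodule.span R (S : Set M) ≤ (N ⊔ Submodule.span R {x} ⊔ Submodule.span R ((S.erase (j : M) : Finset M) : Set M)).comap (c j • LinearMap.id) := by
          refine sup_le ?_ (Submodule.span_le.2 ?_)
          · intro w hw
            exact Submodule.smul_mem _ _ (Submodule.mem_sup_left (Submodule.mem_sup_left hw))
          · intro w hw
            rw [SetLike.mem_coe, Submodule.mem_comap, LinearMap.smul_apply, LinearMap.id_apply]
            by_cases hwj : w = j
            · subst hwj
              have : c j • (j : M) = s • x - y - ∑ i ∈ Finset.univ.erase j, c i • (i : M) := by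
                rw [← hyz, ← hc, ← Finset.add_sum_erase _ _ (Finset.mem_univ j)]
                abel
              rw [this]
              refine sub_mem (sub_mem ?_ ?_) ?_
              · exact Submodule.smul_mem _ _ (Submodule.mem_sup_left (Submodule.mem_sup_right
                  (Submodule.mem_span_singleton_self x)))
              · exact Submodule.mem_sup_left (Submodule.mem_sup_left hy)
              · refine sum_mem fun i hi => Submodule.smul_mem _ _ (Submodule.mem_sup_right
                  (Submodule.subset_span ?_))
                simp only [Finset.coe_erase, Set.mem_sdiff, Finset.mem_coe, Set.mem_singleton_iff]
                refine ⟨i.2, fun h => ?_⟩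
                exact (Finset.mem_erase.1 hi).1 (Subtype.ext h)
            · exact Submodule.smul_mem _ _ (Submodule.mem_sup_right (Submodule.subset_span
                (by simpa using ⟨hw, hwj⟩)))
        exact this hw
      intro w
      rw [mul_smul]
      exact key _ (h1 w)

/-- semilocal choice -/
lemma semilocal (N : Submodule R M) (T : Finset (PrimeSpectrum R)) :
    ∃ h : M, ∀ p ∈ T, InZ N p.asIdeal h → ∀ x, InZ N p.asIdeal x := by
  classical
  induction hn : T.card generalizing T with
  | zero => exact ⟨0, by simp [Finset.card_eq_zero.1 hn]⟩
  | succ n ih =>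
    have hne : T.Nonempty := Finset.card_pos.1 (by omega)
    obtain ⟨p, hp⟩ := T.exists_minimal hne
    obtain ⟨h, hh⟩ := ih (T.erase p) (by rw [Finset.card_erase_of_mem hp.1]; omega)
    by_cases hb : InZ N p.asIdeal h → ∀ x, InZ N p.asIdeal x
    · refine ⟨h, fun q hq => ?_⟩
      by_cases hqp : q = p
      · subst hqp; exact hb
      · exact hh q (Finset.mem_erase.2 ⟨hqp, hq⟩)
    · push Not at hb
      obtain ⟨h1, z, hz⟩ := hb
      have : ∃ r, r ∉ p.asIdeal ∧ ∀ q ∈ T.erase p, r ∈ q.asIdeal := by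
        by_contra hcon
        push Not at hcon
        have : (T.erase p).inf (fun q => q.asIdeal) ≤ p.asIdeal := by
          intro r hr
          by_contra hrp
          obtain ⟨q, hq, hrq⟩ := hcon r hrp
          exact hrq ((Finset.inf_le hq : (T.erase p).inf (fun q => q.asIdeal) ≤ _) hr)
        rw [Ideal.IsPrime.inf_le' p.2] at this
        obtain ⟨q, hq, hqp⟩ := this
        rw [Finset.mem_erase] at hq
        exact hq.1 (le_antisymm hqp (hp.2 hq.2 hqp))
      obtain ⟨r, hr, hrT⟩ := this
      refine ⟨h + r • z, fun q hq => ?_⟩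
      by_cases hqp : q = p
      · subst hqp
        intro h2
        exfalso
        apply hz
        apply InZ.of_smul hr
        have := h2.add (h1.smul (-1))
        simpa using this
      · intro h2
        refine hh q (Finset.mem_erase.2 ⟨hqp, hq⟩) ?_
        have := h2.add ((InZ.of_mem_smul (N := N) (hrT q (Finset.mem_erase.2 ⟨hqp, hq⟩)) z).smul (-1))
        simpa using this

lemma semilocal_LG [Module.Finite R M] {N : Submodule R M} {T : Finset (PrimeSpectrum R)} {k : ℕ}
    {h : M} (hh : ∀ p ∈ T, InZ N p.asIdeal h → ∀ x, InZ N p.asIdeal x)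
    (hk : ∀ p ∈ T, LG N k p.asIdeal) :
    ∀ p ∈ T, LG (N ⊔ Submodule.span R {h}) (k - 1) p.asIdeal := by
  intro p hp
  by_cases hz : InZ N p.asIdeal h
  · have := nak (hh p hp hz)
    exact (LG.zero.2 this).mono le_sup_left (Nat.zero_le _)
  · exact (hk p hp).exch hz

def NoChain (I : Ideal R) : Prop :=
  ∀ p q r : PrimeSpectrum R, I ≤ p.asIdeal → p < q → q < r → False

/-- the bad set is finite, and consists of incomparable primes -/
lemma bad_finite [IsNoetherianRing R] {I : Ideal R} (hI : NoChain I) (N : Submodule R M) (k : ℕ)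
    (hmin : ∀ p : PrimeSpectrum R, p.asIdeal ∈ I.minimalPrimes → LG N k p.asIdeal) :
    ∃ B : Finset (PrimeSpectrum R), (∀ p, p ∈ B ↔ (I ≤ p.asIdeal ∧ ¬ LG N k p.asIdeal)) ∧
      ∀ p ∈ B, ∀ q, p ≤ q → p = q := by
  -- ideal cutting out the bad set
  let b : Ideal R := I ⊔ Ideal.span {s | ∃ S : Finset M, S.card ≤ k ∧
    ∀ x : M, s • x ∈ N ⊔ Submodule.span R (S : Set M)}
  have hb : ∀ p : PrimeSpectrum R, b ≤ p.asIdeal ↔ (I ≤ p.asIdeal ∧ ¬ LG N k p.asIdeal) := by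
    intro p
    simp only [b, sup_le_iff, Ideal.span_le]
    refine and_congr_right fun _ => ?_
    constructor
    · rintro h ⟨S, hS, s, hs, h1⟩
      exact hs (h ⟨S, hS, h1⟩)
    · rintro h s ⟨S, hS, h1⟩
      by_contra hs
      exact h ⟨S, hS, s, hs, h1⟩
  have hmax : ∀ p : PrimeSpectrum R, b ≤ p.asIdeal → ∀ q, p ≤ q → p = q := by
    intro p hp q hpq
    by_contra hne
    have hlt : p < q := lt_of_le_of_ne hpq hne
    have h1 := (hb p).1 hp
    obtain ⟨m, hm, hmp⟩ := Ideal.exists_minimalPrimes_le h1.1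
    have : m.IsPrime := hm.1.1
    let m' : PrimeSpectrum R := ⟨m, this⟩
    have : m' ≠ p := by
      rintro rfl
      exact h1.2 (hmin _ hm)
    exact hI m' p q hm.1.2 (lt_of_le_of_ne hmp this) hlt
  have hfin : {p : PrimeSpectrum R | b ≤ p.asIdeal}.Finite := by
    refine Set.Finite.of_finite_image (f := PrimeSpectrum.asIdeal) ?_ ?_
    · refine (b.finite_minimalPrimes_of_isNoetherianRing R).subset ?_
      rintro _ ⟨p, hp, rfl⟩
      obtain ⟨m, hm, hmp⟩ := Ideal.exists_minimalPrimes_le (show b ≤ p.asIdeal from hp)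
      have : m.IsPrime := hm.1.1
      have := hmax ⟨m, this⟩ hm.1.2 p hmp
      rw [← this]; exact hm
    · intro p _ q _ h
      exact PrimeSpectrum.ext h
  refine ⟨hfin.toFinset, fun p => ?_, fun p hp => ?_⟩
  · simp [hb]
  · exact hmax p (by simpa using hp)

lemma minPrimes_finset [IsNoetherianRing R] (I : Ideal R) :
    ∃ T : Finset (PrimeSpectrum R), ∀ p, p ∈ T ↔ p.asIdeal ∈ I.minimalPrimes := by
  have hfin : {p : PrimeSpectrum R | p.asIdeal ∈ I.minimalPrimes}.Finite := by
    refine Set.Finite.of_finite_image (f := PrimeSpectrum.asIdeal) ?_ ?_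
    · refine (I.finite_minimalPrimes_of_isNoetherianRing R).subset ?_
      rintro _ ⟨p, hp, rfl⟩
      exact hp
    · intro p _ q _ h
      exact PrimeSpectrum.ext h
  exact ⟨hfin.toFinset, by simp⟩

lemma step [IsNoetherianRing R] [Module.Finite R M] {I : Ideal R} (hI : NoChain I)
    (N : Submodule R M) (k : ℕ)
    (hk : ∀ p : PrimeSpectrum R, I ≤ p.asIdeal → LG N (k + 2) p.asIdeal) :
    ∃ h : M, ∀ p : PrimeSpectrum R, I ≤ p.asIdeal →
      LG (N ⊔ Submodule.span R {h}) (k + 1) p.asIdeal := by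
  classical
  obtain ⟨T, hT⟩ := minPrimes_finset I
  obtain ⟨h, hh⟩ := semilocal N T
  have h1 := semilocal_LG hh (fun p hp => hk p ((hT p).1 hp).1.2)
  obtain ⟨B1, hB1, hB1'⟩ := bad_finite hI (N ⊔ Submodule.span R {h}) (k + 1)
    (fun p hp => h1 p ((hT p).2 hp))
  obtain ⟨h', hh'⟩ := semilocal (N ⊔ Submodule.span R {h}) (T ∪ B1)
  have h2 := semilocal_LG (k := k + 1) (fun p hp => hh' p (Finset.mem_union_left B1 hp)) h1
  obtain ⟨B2, hB2, hB2'⟩ := bad_finite hI (N ⊔ Submodule.span R {h} ⊔ Submodule.span R {h'}) k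
    (fun p hp => h2 p ((hT p).2 hp))
  -- choose r
  have : ∃ r, (∀ p ∈ B1, r ∉ p.asIdeal) ∧ ∀ p ∈ B2, p ∉ B1 → r ∈ p.asIdeal := by
    by_contra hcon
    push Not at hcon
    have hsub : (((B2 \ B1).inf (fun q => q.asIdeal) : Ideal R) : Set R) ⊆
        ⋃ i ∈ (↑B1 : Set (PrimeSpectrum R)), (i.asIdeal : Set R) := by
      intro r hr
      by_contra hr'
      simp only [Set.mem_iUnion, SetLike.mem_coe, exists_prop, not_exists,
        not_and] at hr'
      obtain ⟨p, hp, hp1, hrp⟩ := hcon r hr'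
      exact hrp ((Finset.inf_le (Finset.mem_sdiff.2 ⟨hp, hp1⟩) :
        (B2 \ B1).inf (fun q => q.asIdeal) ≤ _) hr)
    by_cases hne : B1.Nonempty
    · obtain ⟨a, ha⟩ := hne
      rw [Ideal.subset_union_prime a a (fun i _ _ _ => i.2)] at hsub
      obtain ⟨p, hp, hle⟩ := hsub
      rw [Ideal.IsPrime.inf_le' p.2] at hle
      obtain ⟨q, hq, hqp⟩ := hle
      rw [Finset.mem_sdiff] at hq
      have := hB2' q hq.1 p hqp
      subst this
      exact hq.2 hp
    · rw [Finset.not_nonempty_iff_eq_empty] at hne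
      subst hne
      have := hsub (zero_mem _)
      simp at this
  obtain ⟨r, hr1, hr2⟩ := this
  refine ⟨h + r • h', fun p hp => ?_⟩
  by_cases hp1 : p ∈ B1
  · have hz : InZ N p.asIdeal h := by
      by_contra hz
      exact ((hB1 p).1 hp1).2 ((hk p hp).exch hz)
    refine (hk p hp).exch fun hz2 => ?_
    have h3 : InZ N p.asIdeal h' := by
      apply InZ.of_smul (hr1 p hp1)
      have := hz2.add (hz.smul (-1))
      simpa using this
    have h4 := nak (hh' p (Finset.mem_union_right _ hp1) (h3.mono le_sup_left))
    exact ((hB1 p).1 hp1).2 ((LG.zero.2 h4).mono le_rfl (Nat.zero_le _))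
  · by_cases hp2 : p ∈ B2
    · have h3 : LG (N ⊔ Submodule.span R {h}) (k + 1) p.asIdeal := by
        by_contra h3
        exact hp1 ((hB1 p).2 ⟨hp, h3⟩)
      obtain ⟨S, hS, s, hs, h4⟩ := h3
      refine LG.of_Z S hS fun x => ?_
      have h5 : N ⊔ Submodule.span R {h} ⊔ Submodule.span R (S : Set M) ≤
          Z (N ⊔ Submodule.span R {h + r • h'} ⊔ Submodule.span R (S : Set M)) p.asIdeal := by
        refine sup_le (sup_le ?_ ?_) ?_
        · intro y hy
          exact InZ.of_mem (Submodule.mem_sup_left (Submodule.mem_sup_left hy))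
        · rw [Submodule.span_singleton_le_iff_mem]
          have h6 : InZ (N ⊔ Submodule.span R {h + r • h'} ⊔ Submodule.span R (S : Set M))
              p.asIdeal (h + r • h') :=
            InZ.of_mem (Submodule.mem_sup_left (Submodule.mem_sup_right
              (Submodule.mem_span_singleton_self _)))
          have := h6.add ((InZ.of_mem_smul (hr2 p hp2 hp1) h').smul (-1))
          rw [mem_Z]
          simpa using this
        · intro y hy
          exact InZ.of_mem (Submodule.mem_sup_right hy)
      exact InZ.of_smul hs (h5 (h4 x))
    · have h3 : LG (N ⊔ Submodule.span R {h} ⊔ Submodule.span R {h'}) k p.asIdeal := by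
        by_contra h3
        exact hp2 ((hB2 p).2 ⟨hp, h3⟩)
      obtain ⟨S, hS, s, hs, h4⟩ := h3
      refine ⟨insert h' S, (Finset.card_insert_le _ _).trans (by omega), s, hs, fun x => ?_⟩
      refine (sup_le (sup_le (sup_le ?_ ?_) ?_) ?_ : N ⊔ Submodule.span R {h} ⊔
        Submodule.span R {h'} ⊔ Submodule.span R (S : Set M) ≤ _) (h4 x)
      · exact le_sup_left.trans le_sup_left
      · rw [Submodule.span_singleton_le_iff_mem]
        have : (h + r • h') + (-r) • h' = h := by simp
        refine (congrArg (· ∈ N ⊔ Submodule.span R {h + r • h'} ⊔ Submodule.span R ((insert h' S : Finset M) : Set M)) this).mp ?_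
        refine add_mem (Submodule.mem_sup_left (Submodule.mem_sup_right
              (Submodule.mem_span_singleton_self _))) (Submodule.mem_sup_right ?_)
        exact Submodule.smul_mem _ _ (Submodule.subset_span (by simp))
      · rw [Submodule.span_singleton_le_iff_mem]
        exact Submodule.mem_sup_right (Submodule.subset_span (by simp))
      · exact le_sup_of_le_right (Submodule.span_mono (by simp))

lemma steps [IsNoetherianRing R] [Module.Finite R M] {I : Ideal R} (hI : NoChain I) (k : ℕ) :
    ∀ (N : Submodule R M), (∀ p : PrimeSpectrum R, I ≤ p.asIdeal → LG N (k + 1) p.asIdeal) →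
    ∃ h : Fin k → M, ∀ p : PrimeSpectrum R, I ≤ p.asIdeal →
      LG (N ⊔ Submodule.span R (Set.range h)) 1 p.asIdeal := by
  induction k with
  | zero => exact fun N hk => ⟨Fin.elim0, by simpa using hk⟩
  | succ k ih =>
    intro N hk
    obtain ⟨h, hh⟩ := step hI N k hk
    obtain ⟨g, hg⟩ := ih _ hh
    refine ⟨Fin.cons h g, fun p hp => ?_⟩
    have := hg p hp
    rwa [sup_assoc, ← Submodule.span_union, Set.singleton_union, ← Fin.range_cons] at this

lemma last_step [IsNoetherianRing R] [Module.Finite R M] {I : Ideal R} (hI : NoChain I)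
    (N : Submodule R M) (hk : ∀ p : PrimeSpectrum R, I ≤ p.asIdeal → LG N 1 p.asIdeal) :
    ∃ v w : M, ∀ p : PrimeSpectrum R, I ≤ p.asIdeal →
      (∃ s, s ∉ p.asIdeal ∧ ∀ x : M, s • x ∈ N ⊔ Submodule.span R {v}) ∨
      (∃ s, s ∉ p.asIdeal ∧ ∀ x : M, s • x ∈ N ⊔ Submodule.span R {w}) := by
  obtain ⟨T, hT⟩ := minPrimes_finset I
  obtain ⟨v, hv⟩ := semilocal N T
  have h1 := semilocal_LG hv (fun p hp => hk p ((hT p).1 hp).1.2)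
  obtain ⟨B, hB, hB'⟩ := bad_finite hI (N ⊔ Submodule.span R {v}) 0
    (fun p hp => h1 p ((hT p).2 hp))
  obtain ⟨w, hw⟩ := semilocal N B
  have h2 := semilocal_LG hw (fun p hp => hk p ((hB p).1 hp).1)
  refine ⟨v, w, fun p hp => ?_⟩
  by_cases hb : p ∈ B
  · exact Or.inr (LG.zero.1 (h2 p hb))
  · left
    apply LG.zero.1
    by_contra h3
    exact hb ((hB p).2 ⟨hp, h3⟩)

end A
end FS

namespace FS
section B
open RingTheory.Sequence
variable {A : Type*} [CommRing A]

lemma set_castSucc {k : ℕ} (a : Fin (k + 1) → A) (i : Fin k) :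
    {y | ∃ j < i.castSucc, a j = y} = {y | ∃ j < i, a (Fin.castSucc j) = y} := by
  ext y
  constructor
  · rintro ⟨j, hj, rfl⟩
    have : (j : ℕ) < k := lt_of_lt_of_le (Fin.lt_def.1 hj) (by simp)
    exact ⟨⟨j, this⟩, hj, rfl⟩
  · rintro ⟨j, hj, rfl⟩
    exact ⟨j.castSucc, hj, rfl⟩

lemma set_last {k : ℕ} (a : Fin (k + 1) → A) :
    {y | ∃ j < Fin.last k, a j = y} = Set.range (fun j : Fin k => a j.castSucc) := by
  ext y
  constructor
  · rintro ⟨j, hj, rfl⟩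
    exact ⟨⟨j, hj⟩, rfl⟩
  · rintro ⟨j, rfl⟩
    exact ⟨j.castSucc, Fin.castSucc_lt_last j, rfl⟩

lemma reg_snoc {k : ℕ} (a : Fin (k + 1) → A) : IsRegularSeq a ↔
    IsRegularSeq (fun j : Fin k => a j.castSucc) ∧ ∀ x, a (Fin.last k) * x ∈
      Ideal.span (Set.range (fun j : Fin k => a j.castSucc)) →
      x ∈ Ideal.span (Set.range (fun j : Fin k => a j.castSucc)) := by
  unfold IsRegularSeq
  rw [Fin.forall_fin_succ']
  simp only [set_castSucc, set_last]

lemma list_snoc (l : List A) (x : A) : IsWeaklyRegular A (l ++ [x]) ↔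
    IsWeaklyRegular A l ∧ ∀ y, x * y ∈ Ideal.ofList l → y ∈ Ideal.ofList l := by
  rw [isWeaklyRegular_append_iff, isWeaklyRegular_singleton_iff,
    isSMulRegular_quotient_iff_mem_of_smul_mem]
  simp

lemma reg_iff_list {k : ℕ} (a : Fin k → A) : IsRegularSeq a ↔ IsWeaklyRegular A (List.ofFn a) := by
  induction k with
  | zero => simp [IsRegularSeq]
  | succ k ih =>
    rw [List.ofFn_succ', List.concat_eq_append, list_snoc, reg_snoc, ih]
    have : Ideal.ofList (List.ofFn fun i : Fin k => a i.castSucc) =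
        Ideal.span (Set.range (fun j : Fin k => a j.castSucc)) := by
      unfold Ideal.ofList
      congr 1
      ext y
      simp [List.mem_ofFn]
    rw [this]

lemma qr0 {k : ℕ} (a : Fin k → A) (ha : IsRegularSeq a) (c : Fin k → A)
    (h : ∑ i, c i * a i = 0) : ∀ i, c i ∈ Ideal.span (Set.range a) := by
  induction k with
  | zero => exact fun i => i.elim0
  | succ k ih =>
    rw [reg_snoc] at ha
    rw [Fin.sum_univ_castSucc] at h
    have h1 : c (Fin.last k) ∈ Ideal.span (Set.range (fun j : Fin k => a j.castSucc)) := by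
      apply ha.2
      have : a (Fin.last k) * c (Fin.last k) = - ∑ i : Fin k, c i.castSucc * a i.castSucc := by
        linear_combination h
      rw [this]
      exact neg_mem (sum_mem fun i _ => Ideal.mul_mem_left _ _ (Ideal.subset_span ⟨i, rfl⟩))
    obtain ⟨d, hd⟩ := (Ideal.mem_span_range_iff_exists_fun).1 h1
    have hle : Ideal.span (Set.range (fun j : Fin k => a j.castSucc)) ≤ Ideal.span (Set.range a) :=
      Ideal.span_mono (by rintro _ ⟨j, rfl⟩; exact ⟨_, rfl⟩)
    have h2 := ih _ ha.1 (fun i => c i.castSucc + d i * a (Fin.last k)) (by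
      rw [← h, ← hd, Finset.sum_mul, ← Finset.sum_add_distrib]
      exact Finset.sum_congr rfl fun i _ => by ring)
    intro i
    refine Fin.lastCases (hle h1) (fun i => ?_) i
    have := hle (h2 i)
    refine (Ideal.add_mem_iff_left _ ?_).1 this
    exact Ideal.mul_mem_left _ _ (Ideal.subset_span ⟨_, rfl⟩)

lemma qr1 {k : ℕ} (a : Fin k → A) (ha : IsRegularSeq a) (c : Fin k → A)
    (h : ∑ i, c i * a i ∈ (Ideal.span (Set.range a)) ^ 2) :
    ∀ i, c i ∈ Ideal.span (Set.range a) := by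
  rw [pow_two, ← smul_eq_mul, Ideal.span, Submodule.mem_ideal_smul_span_iff_exists_sum] at h
  obtain ⟨d, hd, h⟩ := h
  rw [Finsupp.sum_fintype _ _ (by simp)] at h
  have := qr0 a ha (fun i => c i - d i) (by
    simp only [sub_mul, Finset.sum_sub_distrib, ← h, smul_eq_mul, sub_self])
  intro i
  have h2 := add_mem (this i) (hd i)
  rwa [sub_add_cancel] at h2

lemma ind {k : ℕ} (q : Ideal A) (a : Fin k → A) (ha : IsRegularSeq a)
    (haq : Ideal.span (Set.range a) = q) (g : Fin k → A)
    (hg : Ideal.span (Set.range g) = q) (r : Fin k → A)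
    (h : ∑ i, r i * g i ∈ q ^ 2) : ∀ i, r i ∈ q := by
  have qr1 : ∀ c : Fin k → A, ∑ i, c i * a i ∈ q ^ 2 → ∀ i, c i ∈ q := by
    subst haq
    exact qr1 a ha
  have h1 : ∀ i, ∃ c : Fin k → A, ∑ j, c j * a j = g i := fun i =>
    Ideal.mem_span_range_iff_exists_fun.1 (haq.trans hg.symm ▸ Ideal.subset_span ⟨i, rfl⟩)
  have h2 : ∀ i, ∃ c : Fin k → A, ∑ j, c j * g j = a i := fun i =>
    Ideal.mem_span_range_iff_exists_fun.1 (hg.trans haq.symm ▸ Ideal.subset_span ⟨i, rfl⟩)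
  choose M hM using h1
  choose N hN using h2
  let M' : Matrix (Fin k) (Fin k) (A ⧸ q) := Matrix.of fun i j => Ideal.Quotient.mk q (M i j)
  let N' : Matrix (Fin k) (Fin k) (A ⧸ q) := Matrix.of fun i j => Ideal.Quotient.mk q (N i j)
  have hNM : N' * M' = 1 := by
    ext i j
    have h3 := qr1 (fun l => (∑ m, N i m * M m l) - (1 : Matrix (Fin k) (Fin k) A) i l) (by
      have : ∑ l, ((∑ m, N i m * M m l) - (1 : Matrix (Fin k) (Fin k) A) i l) * a l = 0 := by
        simp only [sub_mul, Finset.sum_sub_distrib, Finset.sum_mul]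
        rw [Finset.sum_comm]
        simp only [mul_assoc, ← Finset.mul_sum, hM, hN]
        simp [Matrix.one_apply]
      rw [this]; exact zero_mem _) j
    rw [← Ideal.Quotient.eq_zero_iff_mem, map_sub, sub_eq_zero, map_sum] at h3
    simp only [Matrix.mul_apply, M', N', Matrix.of_apply]
    simp only [map_mul] at h3
    rw [h3, Matrix.one_apply, Matrix.one_apply]
    split_ifs <;> simp
  have hMN : M' * N' = 1 := mul_eq_one_comm.1 hNM
  have h4 := qr1 (fun l => ∑ i, r i * M i l) (by
    have : ∑ l, (∑ i, r i * M i l) * a l = ∑ i, r i * g i := by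
      simp only [Finset.sum_mul]
      rw [Finset.sum_comm]
      simp only [mul_assoc, ← Finset.mul_sum, hM]
    rw [this]; exact h)
  have h5 : Matrix.vecMul (fun i => Ideal.Quotient.mk q (r i)) M' = 0 := by
    ext l
    have := Ideal.Quotient.eq_zero_iff_mem.2 (h4 l)
    simpa [Matrix.vecMul, dotProduct, M'] using this
  have h6 : (fun i => Ideal.Quotient.mk q (r i)) = 0 := by
    rw [← Matrix.vecMul_one (fun i => Ideal.Quotient.mk q (r i)), ← hMN, ← Matrix.vecMul_vecMul, h5,
      Matrix.zero_vecMul]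
  intro i
  exact Ideal.Quotient.eq_zero_iff_mem.1 (congrFun h6 i)

end B
end FS

namespace FS
section C
open RingTheory.Sequence IsLocalRing
variable {A : Type*} [CommRing A]

lemma ofList_ofFn {k : ℕ} (a : Fin k → A) :
    Ideal.ofList (List.ofFn a) = Ideal.span (Set.range a) := by
  unfold Ideal.ofList
  congr 1
  ext y
  simp [List.mem_ofFn]

lemma ofList_perm {l l' : List A} (h : l.Perm l') : Ideal.ofList l = Ideal.ofList l' := by
  unfold Ideal.ofList
  congr 1
  ext y
  exact h.mem_iff

lemma min_gen {k : ℕ} (q : Ideal A) (hq : q ≠ ⊤) (a : Fin k → A) (ha : IsRegularSeq a)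
    (haq : Ideal.span (Set.range a) = q) (l : List A) (hl : Ideal.ofList l = q) :
    k ≤ l.length := by
  by_contra hlt
  push Not at hlt
  have := ind q a ha haq (fun i => l.getD i 0) (by
    rw [← hl]
    apply le_antisymm
    · rw [Ideal.span_le]
      rintro _ ⟨i, rfl⟩
      by_cases hi : (i : ℕ) < l.length
      · simp only [List.getD_eq_getElem _ _ hi]
        exact Ideal.subset_span (List.getElem_mem hi)
      · simp only [List.getD_eq_default _ _ (not_lt.1 hi)]
        exact zero_mem _
    · rw [Ideal.ofList, Ideal.span_le]
      intro x hx
      obtain ⟨i, hi, rfl⟩ := List.getElem_of_mem (show x ∈ l from hx)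
      refine Ideal.subset_span ⟨⟨i, hi.trans hlt⟩, ?_⟩
      simp only [List.getD_eq_getElem _ _ hi]) (Pi.single ⟨l.length, hlt⟩ 1) (by
    rw [Finset.sum_eq_single ⟨l.length, hlt⟩]
    · simp
    · intro b _ hb
      rw [Pi.single_eq_of_ne hb, zero_mul]
    · simp) ⟨l.length, hlt⟩
  rw [Pi.single_eq_same] at this
  exact hq ((Ideal.eq_top_iff_one _).2 this)

lemma split_unit [IsLocalRing A] (l : List A) (z : A) (hz : z ∈ Ideal.ofList l) :
    z ∈ maximalIdeal A * Ideal.ofList l ∨ ∃ s e t d, l = s ++ e :: t ∧ IsUnit d ∧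
      z - d * e ∈ Ideal.ofList (s ++ t) := by
  induction l generalizing z with
  | nil =>
    left
    simp at hz
    simp [hz]
  | cons e t ih =>
    rw [Ideal.ofList_cons] at hz
    obtain ⟨y, hy, z', hz', rfl⟩ := Submodule.mem_sup.1 hz
    obtain ⟨c, rfl⟩ := Ideal.mem_span_singleton'.1 hy
    by_cases hc : IsUnit c
    · right
      exact ⟨[], e, t, c, rfl, hc, by simpa using hz'⟩
    · rcases ih z' hz' with h | ⟨s, e', t', d, rfl, hd, h⟩
      · left
        refine add_mem ?_ ?_
        · refine Ideal.mul_mem_mul ((mem_maximalIdeal _).2 hc) (Ideal.subset_span ?_)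
          simp
        · refine Ideal.mul_mono_right ?_ h
          rw [Ideal.ofList_cons]; exact le_sup_right
      · right
        refine ⟨e :: s, e', t', d, rfl, hd, ?_⟩
        have : c * e + z' - d * e' = c * e + (z' - d * e') := by ring
        rw [this, List.cons_append, Ideal.ofList_cons]
        exact add_mem (Submodule.mem_sup_left hy) (Submodule.mem_sup_right h)

lemma exch_list [IsLocalRing A] [IsNoetherianRing A] {k : ℕ} (q : Ideal A) (hq : q ≠ ⊤)
    (hmin : ∀ l : List A, Ideal.ofList l = q → k ≤ l.length) (h2 : List A) :
    ∀ (h1 l2 : List A), h1.length + h2.length = k → h1.length + l2.length = k →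
      Ideal.ofList (h1 ++ h2) = q → Ideal.ofList (h1 ++ l2) = q →
      IsWeaklyRegular A (h1 ++ l2) → IsWeaklyRegular A (h1 ++ h2) := by
  induction h2 with
  | nil =>
    intro h1 l2 e1 e2 _ _ h
    simp at e1
    have : l2 = [] := List.length_eq_zero_iff.1 (by omega)
    rwa [this] at h
  | cons g h2 ih =>
    intro h1 l2 e1 e2 hg hl hreg
    have hgq : g ∈ Ideal.ofList (h1 ++ l2) := by
      rw [hl, ← hg]; exact Ideal.subset_span (by simp)
    rw [Ideal.ofList_append] at hgq
    obtain ⟨y, hy, z, hz, rfl⟩ := Submodule.mem_sup.1 hgq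
    rcases split_unit l2 z hz with h | ⟨s, e, t, d, rfl, hd, h⟩
    · exfalso
      have hle : q ≤ Ideal.ofList (h1 ++ h2) ⊔ maximalIdeal A • q := by
        conv_lhs => rw [← hg]
        rw [Ideal.ofList_append, Ideal.ofList_cons, Ideal.ofList_append]
        refine sup_le (le_sup_of_le_left le_sup_left) (sup_le ?_ (le_sup_of_le_left le_sup_right))
        rw [Ideal.span_singleton_le_iff_mem]
        refine add_mem (Submodule.mem_sup_left (Submodule.mem_sup_left hy))
          (Submodule.mem_sup_right ?_)
        rw [smul_eq_mul]
        refine Ideal.mul_mono_right ?_ h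
        rw [← hl, Ideal.ofList_append]; exact le_sup_right
      have hle2 := Submodule.le_of_le_smul_of_le_jacobson_bot (IsNoetherian.noetherian q)
        (maximalIdeal_le_jacobson _) hle
      have heq : Ideal.ofList (h1 ++ h2) = q := by
        refine le_antisymm ?_ hle2
        rw [← hg]
        refine Ideal.span_mono ?_
        intro x hx
        simp at hx ⊢
        tauto
      have := hmin _ heq
      simp at this e1
      omega
    · have hm : ∀ r ∈ h1 ++ (s ++ e :: t), r ∈ maximalIdeal A := by
        intro r hr
        apply le_maximalIdeal hq
        rw [← hl]
        exact Ideal.subset_span hr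
      have p1 : (h1 ++ (s ++ e :: t)).Perm ((h1 ++ (s ++ t)) ++ [e]) := by
        rw [List.append_assoc]
        refine List.Perm.append_left _ ?_
        exact List.perm_middle.trans (List.perm_append_singleton e (s ++ t)).symm
      have r1 := isWeaklyRegular_of_perm_of_subset_maximalIdeal hreg p1 hm
      have hK : (y + z) - d * e ∈ Ideal.ofList (h1 ++ (s ++ t)) := by
        rw [add_sub_assoc, Ideal.ofList_append]
        exact add_mem (Submodule.mem_sup_left hy) (Submodule.mem_sup_right h)
      have r2 : IsWeaklyRegular A ((h1 ++ (s ++ t)) ++ [y + z]) := by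
        rw [list_snoc] at r1 ⊢
        refine ⟨r1.1, fun x hx => r1.2 x ?_⟩
        have h3 : d * (e * x) ∈ Ideal.ofList (h1 ++ (s ++ t)) := by
          have := sub_mem hx (Ideal.mul_mem_right x _ hK)
          convert this using 1
          ring
        exact (Ideal.unit_mul_mem_iff_mem _ hd).1 h3
      have hqe : Ideal.ofList ((h1 ++ (s ++ t)) ++ [y + z]) = q := by
        rw [← hl, ofList_perm p1, Ideal.ofList_append, Ideal.ofList_append _ [e],
          Ideal.ofList_singleton, Ideal.ofList_singleton]
        apply le_antisymm
        · refine sup_le le_sup_left ?_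
          rw [Ideal.span_singleton_le_iff_mem]
          have : y + z = (y + z - d * e) + d * e := by ring
          rw [this]
          exact add_mem (Submodule.mem_sup_left hK) (Submodule.mem_sup_right
            (Ideal.mul_mem_left _ _ (Ideal.mem_span_singleton_self e)))
        · refine sup_le le_sup_left ?_
          rw [Ideal.span_singleton_le_iff_mem, ← Ideal.unit_mul_mem_iff_mem _ hd]
          have : d * e = (y + z) - (y + z - d * e) := by ring
          rw [this]
          exact sub_mem (Submodule.mem_sup_right (Ideal.mem_span_singleton_self _))
            (Submodule.mem_sup_left hK)
      have p2 : ((h1 ++ (s ++ t)) ++ [y + z]).Perm ((h1 ++ [y + z]) ++ (s ++ t)) := by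
        rw [List.append_assoc h1 (s ++ t), List.append_assoc h1 [y + z]]
        exact List.Perm.append_left _ List.perm_append_comm
      have hm2 : ∀ r ∈ (h1 ++ (s ++ t)) ++ [y + z], r ∈ maximalIdeal A := by
        intro r hr
        apply le_maximalIdeal hq
        rw [← hqe]
        exact Ideal.subset_span hr
      have r3 := isWeaklyRegular_of_perm_of_subset_maximalIdeal r2 p2 hm2
      have := ih (h1 ++ [y + z]) (s ++ t) (by simp at e1 ⊢; omega) (by simp at e2 ⊢; omega)
        (by rw [List.append_assoc]; exact hg) (by rw [← ofList_perm p2]; exact hqe) r3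
      rwa [List.append_assoc] at this

lemma reg_of_gen [IsLocalRing A] [IsNoetherianRing A] {k : ℕ} (q : Ideal A) (hq : q ≠ ⊤)
    (a : Fin k → A) (ha : IsRegularSeq a) (haq : Ideal.span (Set.range a) = q)
    (g : Fin k → A) (hg : Ideal.span (Set.range g) = q) : IsRegularSeq g := by
  rw [reg_iff_list] at ha ⊢
  exact exch_list q hq (fun l hl => min_gen q hq a ((reg_iff_list a).2 ha) haq l hl) (List.ofFn g) []
    (List.ofFn a) (by simp) (by simp) (by simpa [ofList_ofFn] using hg)
    (by simpa [ofList_ofFn] using haq) ha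

end C
end FS

namespace FS
section D
variable {B : Type*} [CommRing B]

/-- The explicit generators. -/
def gg1 (α β γ δ u v w : B) : B :=
  (α + 3 * δ) * α ^ 2 * (γ ^ 2 * u + α * v) + (3 * α + δ) * γ ^ 2 * (δ ^ 2 * u + β * w)
    - (3 * α + δ) * (γ * u - w) ^ 2

def gg2 (α β γ δ u v w : B) : B :=
  (α + 3 * δ) * β ^ 2 * (γ ^ 2 * u + α * v) + (3 * α + δ) * δ ^ 2 * (δ ^ 2 * u + β * w)
    + (α + 3 * δ) * u ^ 2

def Good (I F : Ideal B) (g1 g2 : B) : Prop :=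
  ∃ a b : B, a ∈ I ∧ b ∈ I ∧ I ≤ F ⊔ Ideal.span {a, b} ⊔ I ^ 2 ∧
    g1 ∈ F ⊔ Ideal.span {b} ⊔ I ^ 2 ∧ g2 ∈ F ⊔ Ideal.span {b} ⊔ I ^ 2 ∧
    a ^ 2 ∈ F ⊔ Ideal.span {g1, g2} ⊔ I * (F ⊔ Ideal.span {b} ⊔ I ^ 2) ∧
    b ∈ F ⊔ Ideal.span {g1, g2} ⊔ I * (F ⊔ Ideal.span {b} ⊔ I ^ 2)

lemma sq_mem {I : Ideal B} {x y : B} (hx : x ∈ I) (hy : y ∈ I) : x * y ∈ I ^ 2 := by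
  rw [pow_two]; exact Ideal.mul_mem_mul hx hy

lemma good1 (I F : Ideal B) (hF : F ≤ I) (α β γ δ u v w : B) (hu : u ∈ I) (hv : v ∈ I)
    (hw : w ∈ I) (hI : I ≤ F ⊔ Ideal.span {u, v, w} ⊔ I ^ 2)
    (h1 : α + δ = 1) (hD : α * δ - β * γ ∈ I) (hvw : α * w - β * v ∈ F ⊔ I ^ 2)
    (hα : IsUnit α) :
    Good I F (gg1 α β γ δ u v w) (gg2 α β γ δ u v w) := by
  obtain ⟨ε, hε⟩ := hα.exists_right_inv
  obtain ⟨c, hc⟩ : ∃ c, c = ε * β := ⟨_, rfl⟩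
  obtain ⟨i, hi⟩ : ∃ i, i = δ - c * γ := ⟨_, rfl⟩
  obtain ⟨j, hj⟩ : ∃ j, j = w - c * v := ⟨_, rfl⟩
  have hiI : i ∈ I := by
    have : i = ε * (α * δ - β * γ) := by rw [hi, hc]; linear_combination (-δ) * hε
    rw [this]; exact Ideal.mul_mem_left _ _ hD
  have hjY : j ∈ F ⊔ I ^ 2 := by
    have : j = ε * (α * w - β * v) := by rw [hj, hc]; linear_combination (-w) * hε
    rw [this]; exact Ideal.mul_mem_left _ _ hvw
  have hβe : β = c * α := by rw [hc]; linear_combination (-β) * hε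
  have hδe : δ = c * γ + i := by rw [hi]; ring
  have hwe : w = c * v + j := by rw [hj]; ring
  obtain ⟨S, hSd⟩ : ∃ S, S = α + c * γ := ⟨_, rfl⟩
  have hS : S + i = 1 := by rw [← h1, hSd, hδe]; ring
  obtain ⟨κ, hκd⟩ : ∃ κ, κ = 3 * α ^ 2 + γ ^ 2 * c ^ 2 - (S ^ 2 + S + 1) := ⟨_, rfl⟩
  have hκ : (α + 3 * δ) * α ^ 2 + (3 * α + δ) * γ ^ 2 * c ^ 2 - 1 = i * κ := by
    rw [hκd, hδe, hSd]; rw [hSd] at hS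
    linear_combination ((α + c * γ) ^ 2 + (α + c * γ) + 1) * hS
  have hI2 : I ^ 2 ≤ I := Ideal.pow_le_self (by norm_num)
  have hYI : F ⊔ I ^ 2 ≤ I := sup_le hF hI2
  have hIY : I ^ 2 ≤ F ⊔ I ^ 2 := le_sup_right
  obtain ⟨G1, hG1⟩ : ∃ G1, G1 = γ ^ 2 * u + α * v := ⟨_, rfl⟩
  obtain ⟨G2, hG2⟩ : ∃ G2, G2 = δ ^ 2 * u + β * w := ⟨_, rfl⟩
  obtain ⟨b, hb⟩ : ∃ b, b = (α + 3 * δ) * α ^ 2 * G1 + (3 * α + δ) * γ ^ 2 * G2 := ⟨_, rfl⟩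
  obtain ⟨b', hb'⟩ : ∃ b', b' = (α + 3 * δ) * β ^ 2 * G1 + (3 * α + δ) * δ ^ 2 * G2 := ⟨_, rfl⟩
  obtain ⟨a, ha⟩ : ∃ a, a = (α + 2 * c * γ) * u - c ^ 2 * v := ⟨_, rfl⟩
  obtain ⟨P, hP⟩ : ∃ P, P = γ * u - w := ⟨_, rfl⟩
  have hG1I : G1 ∈ I := by
    rw [hG1]; exact add_mem (Ideal.mul_mem_left _ _ hu) (Ideal.mul_mem_left _ _ hv)
  have hG2I : G2 ∈ I := by
    rw [hG2]; exact add_mem (Ideal.mul_mem_left _ _ hu) (Ideal.mul_mem_left _ _ hw)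
  have hbI : b ∈ I := by
    rw [hb]; exact add_mem (Ideal.mul_mem_left _ _ hG1I) (Ideal.mul_mem_left _ _ hG2I)
  have haI : a ∈ I := by
    rw [ha]; exact sub_mem (Ideal.mul_mem_left _ _ hu) (Ideal.mul_mem_left _ _ hv)
  have hPI : P ∈ I := by
    rw [hP]; exact sub_mem (Ideal.mul_mem_left _ _ hu) hw
  have s1 : G2 - c ^ 2 * G1 ∈ F ⊔ I ^ 2 := by
    have : G2 - c ^ 2 * G1 = (δ + c * γ) * (i * u) + c * α * j := by
      rw [hG1, hG2, hδe, hβe, hwe]; ring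
    rw [this]
    exact add_mem (hIY (Ideal.mul_mem_left _ _ (sq_mem hiI hu))) (Ideal.mul_mem_left _ _ hjY)
  have s2 : b - G1 ∈ F ⊔ I ^ 2 := by
    have : b - G1 = (3 * α + δ) * γ ^ 2 * (G2 - c ^ 2 * G1) + κ * (i * G1) := by
      rw [hb]; linear_combination G1 * hκ
    rw [this]
    exact add_mem (Ideal.mul_mem_left _ _ s1) (hIY (Ideal.mul_mem_left _ _ (sq_mem hiI hG1I)))
  have s3 : u - (α * a + c ^ 2 * b) ∈ F ⊔ I ^ 2 := by
    have : u - (α * a + c ^ 2 * b) = (1 + S) * (i * u) - c ^ 2 * (b - G1) := by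
      rw [ha, hG1]; linear_combination (-(1 + S) * u) * hS - (S + α + c * γ) * u * hSd * (-1)
    rw [this]
    exact sub_mem (hIY (Ideal.mul_mem_left _ _ (sq_mem hiI hu))) (Ideal.mul_mem_left _ _ s2)
  have s4 : v - (-γ ^ 2 * a + (α + 2 * c * γ) * b) ∈ F ⊔ I ^ 2 := by
    have : v - (-γ ^ 2 * a + (α + 2 * c * γ) * b) = (1 + S) * (i * v) - (α + 2 * c * γ) * (b - G1) := by
      rw [ha, hG1]; linear_combination (-(1 + S) * v) * hS - (S + α + c * γ) * v * hSd * (-1)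
    rw [this]
    exact sub_mem (hIY (Ideal.mul_mem_left _ _ (sq_mem hiI hv))) (Ideal.mul_mem_left _ _ s2)
  have hYQ : F ⊔ I ^ 2 ≤ F ⊔ Ideal.span {b} ⊔ I ^ 2 := sup_le_sup_right le_sup_left _
  have hbQ : b ∈ F ⊔ Ideal.span {b} ⊔ I ^ 2 :=
    Ideal.mem_sup_left (Ideal.mem_sup_right (Ideal.mem_span_singleton_self b))
  obtain ⟨Q, hQ⟩ : ∃ Q, Q = F ⊔ Ideal.span {b} ⊔ I ^ 2 := ⟨_, rfl⟩
  have hI2Q : I ^ 2 ≤ Q := by rw [hQ]; exact le_sup_right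
  have hYab : F ⊔ I ^ 2 ≤ F ⊔ Ideal.span {a, b} ⊔ I ^ 2 := sup_le_sup_right le_sup_left _
  have haab : a ∈ F ⊔ Ideal.span {a, b} ⊔ I ^ 2 :=
    Ideal.mem_sup_left (Ideal.mem_sup_right (Ideal.subset_span (by simp)))
  have hbab : b ∈ F ⊔ Ideal.span {a, b} ⊔ I ^ 2 :=
    Ideal.mem_sup_left (Ideal.mem_sup_right (Ideal.subset_span (by simp)))
  have hu2 : u ∈ F ⊔ Ideal.span {a, b} ⊔ I ^ 2 := by
    have := add_mem (hYab s3) (add_mem (Ideal.mul_mem_left _ α haab)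
      (Ideal.mul_mem_left _ (c ^ 2) hbab))
    rwa [sub_add_cancel] at this
  have hv2 : v ∈ F ⊔ Ideal.span {a, b} ⊔ I ^ 2 := by
    have := add_mem (hYab s4) (add_mem (Ideal.mul_mem_left _ (-γ ^ 2) haab)
      (Ideal.mul_mem_left _ ((α + 2 * c * γ)) hbab))
    rwa [sub_add_cancel] at this
  have hw2 : w ∈ F ⊔ Ideal.span {a, b} ⊔ I ^ 2 := by
    have := add_mem (Ideal.mul_mem_left _ c hv2) (hYab hjY)
    rwa [← hwe] at this
  rw [← hQ] at hYQ hbQ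
  have s5 : G1 ∈ Q := by
    have := sub_mem hbQ (hYQ s2)
    rwa [sub_sub_cancel] at this
  have s6 : G2 ∈ Q := by
    have := add_mem (hYQ s1) (Ideal.mul_mem_left _ (c ^ 2) s5)
    rwa [sub_add_cancel] at this
  have s7 : u - α * a ∈ Q := by
    have : u - α * a = (u - (α * a + c ^ 2 * b)) + c ^ 2 * b := by ring
    rw [this]
    exact add_mem (hYQ s3) (Ideal.mul_mem_left _ _ hbQ)
  have s8 : v + γ ^ 2 * a ∈ Q := by
    have : v + γ ^ 2 * a = (v - (-γ ^ 2 * a + (α + 2 * c * γ) * b)) + (α + 2 * c * γ) * b := by ring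
    rw [this]
    exact add_mem (hYQ s4) (Ideal.mul_mem_left _ _ hbQ)
  have s9 : P - γ * a ∈ Q := by
    have : P - γ * a = γ * (u - α * a) - c * (v + γ ^ 2 * a) - j - γ * (i * a) := by
      rw [hP]; linear_combination (-1 : B) * hwe + γ * a * hS - γ * a * hSd
    rw [this]
    exact sub_mem (sub_mem (sub_mem (Ideal.mul_mem_left _ _ s7) (Ideal.mul_mem_left _ _ s8)) (hYQ hjY)) (Ideal.mul_mem_left _ _ (hI2Q (sq_mem hiI haI)))
  have haa : a ^ 2 ∈ Q := hI2Q (by rw [pow_two a]; exact sq_mem haI haI)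
  have s10 : u ^ 2 - α ^ 2 * a ^ 2 ∈ I * Q := by
    have : u ^ 2 - α ^ 2 * a ^ 2 = (u + α * a) * (u - α * a) := by ring
    rw [this]
    exact Ideal.mul_mem_mul (add_mem hu (Ideal.mul_mem_left _ _ haI)) s7
  have s11 : P ^ 2 - γ ^ 2 * a ^ 2 ∈ I * Q := by
    have : P ^ 2 - γ ^ 2 * a ^ 2 = (P + γ * a) * (P - γ * a) := by ring
    rw [this]
    exact Ideal.mul_mem_mul (add_mem hPI (Ideal.mul_mem_left _ _ haI)) s9
  have s12 : b' - c ^ 2 * b ∈ I * Q := by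
    have : b' - c ^ 2 * b = ((3 * α + δ) * (δ + c * γ)) * (i * G2) := by
      rw [hb', hb, hβe, hδe]; ring
    rw [this]
    exact Ideal.mul_mem_left _ _ (Ideal.mul_mem_mul hiI s6)
  have hIQ : I * Q ≤ Q := Ideal.mul_le_right
  have hg1 : gg1 α β γ δ u v w = b - (3 * α + δ) * P ^ 2 := by
    rw [gg1, hb, hG1, hG2, hP]
  have hg2 : gg2 α β γ δ u v w = b' + (α + 3 * δ) * u ^ 2 := by
    rw [gg2, hb', hG1, hG2]
  have hb'Q : b' ∈ Q := by
    have := add_mem (hIQ s12) (Ideal.mul_mem_left _ (c ^ 2) hbQ)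
    rwa [sub_add_cancel] at this
  have s13 : a ^ 2 - (gg2 α β γ δ u v w - c ^ 2 * gg1 α β γ δ u v w) ∈ I * Q := by
    have : a ^ 2 - (gg2 α β γ δ u v w - c ^ 2 * gg1 α β γ δ u v w) = (-1) * (b' - c ^ 2 * b)
        - 1 * (α + 3 * δ) * (u ^ 2 - α ^ 2 * a ^ 2)
        - c ^ 2 * (3 * α + δ) * (P ^ 2 - γ ^ 2 * a ^ 2) - κ * (i * a ^ 2) := by
      rw [hg1, hg2]; linear_combination (- a ^ 2) * hκ
    rw [this]
    exact sub_mem (sub_mem (sub_mem (Ideal.mul_mem_left _ _ s12) (Ideal.mul_mem_left _ _ s10))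
      (Ideal.mul_mem_left _ _ s11)) (Ideal.mul_mem_left _ _ (Ideal.mul_mem_mul hiI haa))
  have e1 : gg1 α β γ δ u v w ∈ Ideal.span {gg1 α β γ δ u v w, gg2 α β γ δ u v w} :=
    Ideal.subset_span (by simp)
  have e2 : gg2 α β γ δ u v w ∈ Ideal.span {gg1 α β γ δ u v w, gg2 α β γ δ u v w} :=
    Ideal.subset_span (by simp)
  have s14 : a ^ 2 ∈ F ⊔ Ideal.span {gg1 α β γ δ u v w, gg2 α β γ δ u v w} ⊔ I * Q := by
    have h3 : gg2 α β γ δ u v w - c ^ 2 * gg1 α β γ δ u v w ∈ F ⊔ Ideal.span {gg1 α β γ δ u v w, gg2 α β γ δ u v w} ⊔ I * Q :=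
      Ideal.mem_sup_left (Ideal.mem_sup_right (sub_mem e2 (Ideal.mul_mem_left _ _ e1)))
    have := add_mem (Ideal.mem_sup_right s13) h3
    rwa [sub_add_cancel] at this
  refine ⟨a, b, haI, hbI, ?_, ?_, ?_, ?_, ?_⟩
  · refine hI.trans (sup_le (sup_le (le_sup_left.trans le_sup_left) ?_) le_sup_right)
    rw [Ideal.span_le]
    rintro x (rfl | rfl | rfl)
    · exact hu2
    · exact hv2
    · exact hw2
  · rw [← hQ, hg1]
    exact sub_mem hbQ (Ideal.mul_mem_left _ _ (hI2Q (Ideal.pow_mem_pow hPI 2)))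
  · rw [← hQ, hg2]
    exact add_mem hb'Q (Ideal.mul_mem_left _ _ (hI2Q (Ideal.pow_mem_pow hu 2)))
  · rw [← hQ]; exact s14
  · rw [← hQ]
    have : b = gg1 α β γ δ u v w + (3 * α + δ) * γ ^ 2 * a ^ 2 + (3 * α + δ) * (P ^ 2 - γ ^ 2 * a ^ 2) := by
      rw [hg1]; ring
    rw [this]
    exact add_mem (add_mem (Ideal.mem_sup_left (Ideal.mem_sup_right e1)) (Ideal.mul_mem_left _ _ s14))
      (Ideal.mem_sup_right (Ideal.mul_mem_left _ _ s11))

lemma good2 (I F : Ideal B) (hF : F ≤ I) (α β γ δ u v w : B) (hu : u ∈ I) (hv : v ∈ I)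
    (hw : w ∈ I) (hI : I ≤ F ⊔ Ideal.span {u, v, w} ⊔ I ^ 2)
    (h1 : α + δ = 1) (hD : α * δ - β * γ ∈ I) (hvw : δ * v - γ * w ∈ F ⊔ I ^ 2)
    (hα : IsUnit δ) :
    Good I F (gg1 α β γ δ u v w) (gg2 α β γ δ u v w) := by
  obtain ⟨ε, hε⟩ := hα.exists_right_inv
  obtain ⟨c, hc⟩ : ∃ c, c = ε * γ := ⟨_, rfl⟩
  obtain ⟨i, hi⟩ : ∃ i, i = α - c * β := ⟨_, rfl⟩
  obtain ⟨j, hj⟩ : ∃ j, j = v - c * w := ⟨_, rfl⟩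
  have hiI : i ∈ I := by
    have : i = ε * (α * δ - β * γ) := by rw [hi, hc]; linear_combination (-α) * hε
    rw [this]; exact Ideal.mul_mem_left _ _ hD
  have hjY : j ∈ F ⊔ I ^ 2 := by
    have : j = ε * (δ * v - γ * w) := by rw [hj, hc]; linear_combination (-v) * hε
    rw [this]; exact Ideal.mul_mem_left _ _ hvw
  have hγe : γ = c * δ := by rw [hc]; linear_combination (-γ) * hε
  have hαe : α = c * β + i := by rw [hi]; ring
  have hve : v = c * w + j := by rw [hj]; ring
  obtain ⟨S, hSd⟩ : ∃ S, S = c * β + δ := ⟨_, rfl⟩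
  have hS : S + i = 1 := by rw [← h1, hSd, hαe]; ring
  obtain ⟨κ, hκd⟩ : ∃ κ, κ = c ^ 2 * β ^ 2 + 3 * δ ^ 2 - (S ^ 2 + S + 1) := ⟨_, rfl⟩
  have hκ : (α + 3 * δ) * β ^ 2 * c ^ 2 + (3 * α + δ) * δ ^ 2 - 1 = i * κ := by
    rw [hκd, hαe, hSd]; rw [hSd] at hS
    linear_combination ((c * β + δ) ^ 2 + (c * β + δ) + 1) * hS
  have hI2 : I ^ 2 ≤ I := Ideal.pow_le_self (by norm_num)
  have hYI : F ⊔ I ^ 2 ≤ I := sup_le hF hI2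
  have hIY : I ^ 2 ≤ F ⊔ I ^ 2 := le_sup_right
  obtain ⟨G1, hG1⟩ : ∃ G1, G1 = γ ^ 2 * u + α * v := ⟨_, rfl⟩
  obtain ⟨G2, hG2⟩ : ∃ G2, G2 = δ ^ 2 * u + β * w := ⟨_, rfl⟩
  obtain ⟨b, hb⟩ : ∃ b, b = (α + 3 * δ) * β ^ 2 * G1 + (3 * α + δ) * δ ^ 2 * G2 := ⟨_, rfl⟩
  obtain ⟨b', hb'⟩ : ∃ b', b' = (α + 3 * δ) * α ^ 2 * G1 + (3 * α + δ) * γ ^ 2 * G2 := ⟨_, rfl⟩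
  obtain ⟨a, ha⟩ : ∃ a, a = (c ^ 2 * β + 2 * c * δ) * u - w := ⟨_, rfl⟩
  obtain ⟨P, hP⟩ : ∃ P, P = γ * u - w := ⟨_, rfl⟩
  have hG1I : G1 ∈ I := by
    rw [hG1]; exact add_mem (Ideal.mul_mem_left _ _ hu) (Ideal.mul_mem_left _ _ hv)
  have hG2I : G2 ∈ I := by
    rw [hG2]; exact add_mem (Ideal.mul_mem_left _ _ hu) (Ideal.mul_mem_left _ _ hw)
  have hbI : b ∈ I := by
    rw [hb]; exact add_mem (Ideal.mul_mem_left _ _ hG1I) (Ideal.mul_mem_left _ _ hG2I)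
  have haI : a ∈ I := by
    rw [ha]; exact sub_mem (Ideal.mul_mem_left _ _ hu) hw
  have hPI : P ∈ I := by
    rw [hP]; exact sub_mem (Ideal.mul_mem_left _ _ hu) hw
  have s1 : G1 - c ^ 2 * G2 ∈ F ⊔ I ^ 2 := by
    have : G1 - c ^ 2 * G2 = 1 * (i * v) + c * β * j := by
      rw [hG1, hG2, hγe, hαe, hve]; ring
    rw [this]
    exact add_mem (hIY (Ideal.mul_mem_left _ _ (sq_mem hiI hv))) (Ideal.mul_mem_left _ _ hjY)
  have s2 : b - G2 ∈ F ⊔ I ^ 2 := by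
    have : b - G2 = (α + 3 * δ) * β ^ 2 * (G1 - c ^ 2 * G2) + κ * (i * G2) := by
      rw [hb]; linear_combination G2 * hκ
    rw [this]
    exact add_mem (Ideal.mul_mem_left _ _ s1) (hIY (Ideal.mul_mem_left _ _ (sq_mem hiI hG2I)))
  have s3 : u - (β * a + 1 * b) ∈ F ⊔ I ^ 2 := by
    have : u - (β * a + 1 * b) = (1 + S) * (i * u) - 1 * (b - G2) := by
      rw [ha, hG2]; linear_combination (-(1 + S) * u) * hS - (S + c * β + δ) * u * hSd * (-1)
    rw [this]
    exact sub_mem (hIY (Ideal.mul_mem_left _ _ (sq_mem hiI hu))) (Ideal.mul_mem_left _ _ s2)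
  have s4 : w - (-δ ^ 2 * a + (c ^ 2 * β + 2 * c * δ) * b) ∈ F ⊔ I ^ 2 := by
    have : w - (-δ ^ 2 * a + (c ^ 2 * β + 2 * c * δ) * b) = (1 + S) * (i * w) - (c ^ 2 * β + 2 * c * δ) * (b - G2) := by
      rw [ha, hG2]; linear_combination (-(1 + S) * w) * hS - (S + c * β + δ) * w * hSd * (-1)
    rw [this]
    exact sub_mem (hIY (Ideal.mul_mem_left _ _ (sq_mem hiI hw))) (Ideal.mul_mem_left _ _ s2)
  have hYQ : F ⊔ I ^ 2 ≤ F ⊔ Ideal.span {b} ⊔ I ^ 2 := sup_le_sup_right le_sup_left _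
  have hbQ : b ∈ F ⊔ Ideal.span {b} ⊔ I ^ 2 :=
    Ideal.mem_sup_left (Ideal.mem_sup_right (Ideal.mem_span_singleton_self b))
  obtain ⟨Q, hQ⟩ : ∃ Q, Q = F ⊔ Ideal.span {b} ⊔ I ^ 2 := ⟨_, rfl⟩
  have hI2Q : I ^ 2 ≤ Q := by rw [hQ]; exact le_sup_right
  have hYab : F ⊔ I ^ 2 ≤ F ⊔ Ideal.span {a, b} ⊔ I ^ 2 := sup_le_sup_right le_sup_left _
  have haab : a ∈ F ⊔ Ideal.span {a, b} ⊔ I ^ 2 :=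
    Ideal.mem_sup_left (Ideal.mem_sup_right (Ideal.subset_span (by simp)))
  have hbab : b ∈ F ⊔ Ideal.span {a, b} ⊔ I ^ 2 :=
    Ideal.mem_sup_left (Ideal.mem_sup_right (Ideal.subset_span (by simp)))
  have hu2 : u ∈ F ⊔ Ideal.span {a, b} ⊔ I ^ 2 := by
    have := add_mem (hYab s3) (add_mem (Ideal.mul_mem_left _ β haab)
      (Ideal.mul_mem_left _ (1) hbab))
    rwa [sub_add_cancel] at this
  have hw2 : w ∈ F ⊔ Ideal.span {a, b} ⊔ I ^ 2 := by
    have := add_mem (hYab s4) (add_mem (Ideal.mul_mem_left _ (-δ ^ 2) haab)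
      (Ideal.mul_mem_left _ ((c ^ 2 * β + 2 * c * δ)) hbab))
    rwa [sub_add_cancel] at this
  have hv2 : v ∈ F ⊔ Ideal.span {a, b} ⊔ I ^ 2 := by
    have := add_mem (Ideal.mul_mem_left _ c hw2) (hYab hjY)
    rwa [← hve] at this
  rw [← hQ] at hYQ hbQ
  have s5 : G2 ∈ Q := by
    have := sub_mem hbQ (hYQ s2)
    rwa [sub_sub_cancel] at this
  have s6 : G1 ∈ Q := by
    have := add_mem (hYQ s1) (Ideal.mul_mem_left _ (c ^ 2) s5)
    rwa [sub_add_cancel] at this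
  have s7 : u - β * a ∈ Q := by
    have : u - β * a = (u - (β * a + 1 * b)) + 1 * b := by ring
    rw [this]
    exact add_mem (hYQ s3) (Ideal.mul_mem_left _ _ hbQ)
  have s8 : w + δ ^ 2 * a ∈ Q := by
    have : w + δ ^ 2 * a = (w - (-δ ^ 2 * a + (c ^ 2 * β + 2 * c * δ) * b)) + (c ^ 2 * β + 2 * c * δ) * b := by ring
    rw [this]
    exact add_mem (hYQ s4) (Ideal.mul_mem_left _ _ hbQ)
  have s9 : P - δ * a ∈ Q := by
    have : P - δ * a = c * δ * (u - β * a) - (w + δ ^ 2 * a) - δ * (i * a) := by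
      rw [hP]; linear_combination u * hγe + δ * a * hS - δ * a * hSd
    rw [this]
    exact sub_mem (sub_mem (Ideal.mul_mem_left _ _ s7) s8) (Ideal.mul_mem_left _ _ (hI2Q (sq_mem hiI haI)))
  have haa : a ^ 2 ∈ Q := hI2Q (by rw [pow_two a]; exact sq_mem haI haI)
  have s10 : u ^ 2 - β ^ 2 * a ^ 2 ∈ I * Q := by
    have : u ^ 2 - β ^ 2 * a ^ 2 = (u + β * a) * (u - β * a) := by ring
    rw [this]
    exact Ideal.mul_mem_mul (add_mem hu (Ideal.mul_mem_left _ _ haI)) s7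
  have s11 : P ^ 2 - δ ^ 2 * a ^ 2 ∈ I * Q := by
    have : P ^ 2 - δ ^ 2 * a ^ 2 = (P + δ * a) * (P - δ * a) := by ring
    rw [this]
    exact Ideal.mul_mem_mul (add_mem hPI (Ideal.mul_mem_left _ _ haI)) s9
  have s12 : b' - c ^ 2 * b ∈ I * Q := by
    have : b' - c ^ 2 * b = ((α + 3 * δ) * (α + c * β)) * (i * G1) := by
      rw [hb', hb, hγe, hαe]; ring
    rw [this]
    exact Ideal.mul_mem_left _ _ (Ideal.mul_mem_mul hiI s6)
  have hIQ : I * Q ≤ Q := Ideal.mul_le_right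
  have hg1 : gg1 α β γ δ u v w = b' - (3 * α + δ) * P ^ 2 := by
    rw [gg1, hb', hG1, hG2, hP]
  have hg2 : gg2 α β γ δ u v w = b + (α + 3 * δ) * u ^ 2 := by
    rw [gg2, hb, hG1, hG2]
  have hb'Q : b' ∈ Q := by
    have := add_mem (hIQ s12) (Ideal.mul_mem_left _ (c ^ 2) hbQ)
    rwa [sub_add_cancel] at this
  have s13 : a ^ 2 - (c ^ 2 * gg2 α β γ δ u v w - gg1 α β γ δ u v w) ∈ I * Q := by
    have : a ^ 2 - (c ^ 2 * gg2 α β γ δ u v w - gg1 α β γ δ u v w) = 1 * (b' - c ^ 2 * b)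
        - c ^ 2 * (α + 3 * δ) * (u ^ 2 - β ^ 2 * a ^ 2)
        - 1 * (3 * α + δ) * (P ^ 2 - δ ^ 2 * a ^ 2) - κ * (i * a ^ 2) := by
      rw [hg1, hg2]; linear_combination (- a ^ 2) * hκ
    rw [this]
    exact sub_mem (sub_mem (sub_mem (Ideal.mul_mem_left _ _ s12) (Ideal.mul_mem_left _ _ s10))
      (Ideal.mul_mem_left _ _ s11)) (Ideal.mul_mem_left _ _ (Ideal.mul_mem_mul hiI haa))
  have e1 : gg1 α β γ δ u v w ∈ Ideal.span {gg1 α β γ δ u v w, gg2 α β γ δ u v w} :=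
    Ideal.subset_span (by simp)
  have e2 : gg2 α β γ δ u v w ∈ Ideal.span {gg1 α β γ δ u v w, gg2 α β γ δ u v w} :=
    Ideal.subset_span (by simp)
  have s14 : a ^ 2 ∈ F ⊔ Ideal.span {gg1 α β γ δ u v w, gg2 α β γ δ u v w} ⊔ I * Q := by
    have h3 : c ^ 2 * gg2 α β γ δ u v w - gg1 α β γ δ u v w ∈ F ⊔ Ideal.span {gg1 α β γ δ u v w, gg2 α β γ δ u v w} ⊔ I * Q :=
      Ideal.mem_sup_left (Ideal.mem_sup_right (sub_mem (Ideal.mul_mem_left _ _ e2) e1))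
    have := add_mem (Ideal.mem_sup_right s13) h3
    rwa [sub_add_cancel] at this
  refine ⟨a, b, haI, hbI, ?_, ?_, ?_, ?_, ?_⟩
  · refine hI.trans (sup_le (sup_le (le_sup_left.trans le_sup_left) ?_) le_sup_right)
    rw [Ideal.span_le]
    rintro x (rfl | rfl | rfl)
    · exact hu2
    · exact hv2
    · exact hw2
  · rw [← hQ, hg1]
    exact sub_mem hb'Q (Ideal.mul_mem_left _ _ (hI2Q (Ideal.pow_mem_pow hPI 2)))
  · rw [← hQ, hg2]
    exact add_mem hbQ (Ideal.mul_mem_left _ _ (hI2Q (Ideal.pow_mem_pow hu 2)))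
  · rw [← hQ]; exact s14
  · rw [← hQ]
    have : b = gg2 α β γ δ u v w - (α + 3 * δ) * β ^ 2 * a ^ 2 - (α + 3 * δ) * (u ^ 2 - β ^ 2 * a ^ 2) := by
      rw [hg2]; ring
    rw [this]
    exact sub_mem (sub_mem (Ideal.mem_sup_left (Ideal.mem_sup_right e2)) (Ideal.mul_mem_left _ _ s14))
      (Ideal.mem_sup_right (Ideal.mul_mem_left _ _ s10))

end D
end FS

namespace FS
section E1
variable {B : Type*} [CommRing B]

def ext2 {m : ℕ} (f : Fin m → B) (x y : B) : Fin (m + 2) → B :=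
  Fin.snoc (α := fun _ => B) (Fin.snoc (α := fun _ => B) f x) y

lemma range_snoc {m : ℕ} (f : Fin m → B) (x : B) :
    Set.range (Fin.snoc (α := fun _ => B) f x) = Set.range f ∪ {x} := by
  ext z
  constructor
  · rintro ⟨i, rfl⟩
    induction i using Fin.lastCases with
    | last => simp
    | cast i => simp
  · rintro (⟨i, rfl⟩ | rfl)
    · exact ⟨i.castSucc, by simp⟩
    · exact ⟨Fin.last m, by simp⟩

lemma span_ext2 {m : ℕ} (f : Fin m → B) (x y : B) :
    Ideal.span (Set.range (ext2 f x y)) = Ideal.span (Set.range f) ⊔ Ideal.span {x, y} := by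
  unfold ext2
  rw [range_snoc, range_snoc, Set.union_assoc, Ideal.span_union]
  rfl

lemma sum_ext2 {m : ℕ} (f : Fin m → B) (x y : B) (r : Fin m → B) (s t : B) :
    ∑ i, ext2 r s t i * ext2 f x y i = ∑ i, r i * f i + s * x + t * y := by
  unfold ext2
  rw [Fin.sum_univ_castSucc, Fin.sum_univ_castSucc]
  simp

lemma reg_sq {m : ℕ} (f : Fin m → B) (x y : B) (h : IsRegularSeq (ext2 f x y)) :
    IsRegularSeq (ext2 f x (y ^ 2)) := by
  unfold ext2 at *
  rw [reg_snoc] at *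
  simp only [Fin.snoc_castSucc, Fin.snoc_last] at *
  refine ⟨h.1, fun z hz => h.2 _ (h.2 _ ?_)⟩
  rwa [← mul_assoc, ← pow_two]

lemma nakL [IsLocalRing B] [IsNoetherianRing B] {I N N' : Ideal B} (hI : I ≠ ⊤)
    (h : N ≤ N' ⊔ I * N) : N ≤ N' :=
  Submodule.le_of_le_smul_of_le_jacobson_bot (IsNoetherian.noetherian _)
    ((IsLocalRing.le_maximalIdeal hI).trans (IsLocalRing.maximalIdeal_le_jacobson _)) h

lemma local_good [IsLocalRing B] [IsNoetherianRing B] (I : Ideal B) (hI : I ≠ ⊤) {m : ℕ}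
    (f : Fin m → B) (hf : Ideal.span (Set.range f) ≤ I) (c : Fin (m + 2) → B)
    (hc : IsRegularSeq c)
    (hcI : Ideal.span (Set.range c) = I) (g1 g2 : B)
    (hg : Good I (Ideal.span (Set.range f)) g1 g2) :
    I ^ 2 ≤ Ideal.span (Set.range f) ⊔ Ideal.span {g1, g2} ∧
    ∃ d : Fin (m + 2) → B, IsRegularSeq d ∧
      Ideal.span (Set.range d) = Ideal.span (Set.range f) ⊔ Ideal.span {g1, g2} := by
  obtain ⟨a, b, ha, hb, h1, h2, h3, h4, h5⟩ := hg
  obtain ⟨F, hF⟩ : ∃ F, F = Ideal.span (Set.range f) := ⟨_, rfl⟩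
  rw [← hF] at hf h1 h2 h3 h4 h5 ⊢
  obtain ⟨Q, hQ⟩ : ∃ Q, Q = F ⊔ Ideal.span {b} ⊔ I ^ 2 := ⟨_, rfl⟩
  rw [← hQ] at h2 h3 h4 h5
  have hab : I = F ⊔ Ideal.span {b, a} := by
    rw [Set.pair_comm]
    refine le_antisymm ?_ ?_
    · apply nakL hI; rwa [pow_two] at h1
    · refine sup_le hf ?_
      rw [Ideal.span_le]
      rintro x (rfl | rfl)
      · exact ha
      · exact hb
  have hFQ : F ≤ Q := by rw [hQ]; exact le_sup_left.trans le_sup_left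
  have hI2Q : I ^ 2 ≤ Q := by rw [hQ]; exact le_sup_right
  have hbQ : b ∈ Q := by
    rw [hQ]; exact Ideal.mem_sup_left (Ideal.mem_sup_right (Ideal.mem_span_singleton_self b))
  have key : I ^ 2 ≤ F ⊔ Ideal.span {b, a ^ 2} := by
    rw [pow_two]
    conv_lhs => rw [hab]
    rw [Ideal.mul_le]
    intro x hx y hy
    obtain ⟨x1, hx1, x2, hx2, rfl⟩ := Submodule.mem_sup.1 hx
    obtain ⟨y1, hy1, y2, hy2, rfl⟩ := Submodule.mem_sup.1 hy
    obtain ⟨p, q, rfl⟩ := Ideal.mem_span_pair.1 hx2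
    obtain ⟨r, s, rfl⟩ := Ideal.mem_span_pair.1 hy2
    have : (x1 + (p * b + q * a)) * (y1 + (r * b + s * a)) =
      ((y1 + (r * b + s * a)) * x1 + (p * b + q * a) * y1) +
        ((p * r * b + p * s * a + q * r * a) * b + (q * s) * a ^ 2) := by ring
    rw [this]
    refine add_mem (Ideal.mem_sup_left (add_mem (Ideal.mul_mem_left _ _ hx1)
      (Ideal.mul_mem_left _ _ hy1))) (Ideal.mem_sup_right ?_)
    exact Ideal.mem_span_pair.2 ⟨_, _, rfl⟩
  have hQ' : Q = F ⊔ Ideal.span {b, a ^ 2} := by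
    refine le_antisymm ?_ ?_
    · rw [hQ]
      refine sup_le (sup_le le_sup_left ?_) key
      exact (Ideal.span_mono (by simp)).trans le_sup_right
    · refine sup_le hFQ ?_
      rw [Ideal.span_le]
      rintro x (rfl | rfl)
      · exact hbQ
      · exact hI2Q (Ideal.pow_mem_pow ha 2)
  have hQg : Q = F ⊔ Ideal.span {g1, g2} := by
    refine le_antisymm ?_ ?_
    · apply nakL hI
      conv_lhs => rw [hQ']
      refine sup_le (le_sup_left.trans le_sup_left) ?_
      rw [Ideal.span_le]
      rintro x (rfl | rfl)
      · exact h5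
      · exact h4
    · refine sup_le hFQ ?_
      rw [Ideal.span_le]
      rintro x (rfl | rfl)
      · exact h2
      · exact h3
  rw [← hQg]
  refine ⟨hI2Q, ext2 f b (a ^ 2), reg_sq _ _ _ ?_, ?_⟩
  · refine reg_of_gen I hI c hc hcI _ ?_
    rw [span_ext2, ← hF, ← hab]
  · rw [span_ext2, ← hF, ← hQ']
end E1
end FS

namespace FS
section E2
variable {R : Type*} [CommRing R]

lemma loc_mem (p : PrimeSpectrum R) (K : Ideal R) (x : R) :
    algebraMap R (Localization.AtPrime p.asIdeal) x ∈
      K.map (algebraMap R (Localization.AtPrime p.asIdeal)) ↔ ∃ s, s ∉ p.asIdeal ∧ s * x ∈ K := by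
  rw [IsLocalization.algebraMap_mem_map_algebraMap_iff p.asIdeal.primeCompl]
  rfl

lemma loc_le (p : PrimeSpectrum R) (J K : Ideal R)
    (h : ∀ x ∈ J, ∃ s, s ∉ p.asIdeal ∧ s * x ∈ K) :
    J.map (algebraMap R (Localization.AtPrime p.asIdeal)) ≤
      K.map (algebraMap R (Localization.AtPrime p.asIdeal)) := by
  rw [Ideal.map_le_iff_le_comap]
  intro x hx
  exact (loc_mem p K x).2 (h x hx)

lemma locglob (K : Ideal R) (x : R) (h : ∀ p : PrimeSpectrum R, ∃ s, s ∉ p.asIdeal ∧ s * x ∈ K) :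
    x ∈ K := by
  by_contra hx
  let L : Ideal R := K.colon {x}
  have hL : L ≠ ⊤ := by
    intro h1
    apply hx
    have : (1 : R) ∈ L := h1 ▸ trivial
    simpa [L, Submodule.mem_colon_singleton] using this
  obtain ⟨M, hM, hLM⟩ := Ideal.exists_le_maximal L hL
  obtain ⟨s, hs, hsx⟩ := h ⟨M, hM.isPrime⟩
  exact hs (hLM (by simpa [L, Submodule.mem_colon_singleton] using hsx))

lemma lci_LG [IsNoetherianRing R] {I : Ideal R} {n : ℕ} (p : PrimeSpectrum R)
    (h : ∃ a : Fin n → Localization.AtPrime p.asIdeal, IsRegularSeq a ∧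
      Ideal.span (Set.range a) = I.map (algebraMap R (Localization.AtPrime p.asIdeal))) :
    LG (⊥ : Submodule R I) n p.asIdeal := by
  classical
  obtain ⟨a, -, ha⟩ := h
  have h1 : ∀ i, ∃ (y : I) (s : p.asIdeal.primeCompl), a i * algebraMap R _ (s : R) =
      algebraMap R (Localization.AtPrime p.asIdeal) (y : R) := by
    intro i
    have : a i ∈ I.map (algebraMap R (Localization.AtPrime p.asIdeal)) := by
      rw [← ha]; exact Ideal.subset_span ⟨i, rfl⟩
    rw [IsLocalization.mem_map_algebraMap_iff p.asIdeal.primeCompl] at this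
    obtain ⟨⟨y, s⟩, h⟩ := this
    exact ⟨y, s, h⟩
  choose y s hys using h1
  refine ⟨Finset.univ.image y, Finset.card_image_le.trans (by simp), common ?_⟩
  intro x
  have hle : I.map (algebraMap R (Localization.AtPrime p.asIdeal)) ≤
      (Ideal.span (Set.range fun i => (y i : R))).map
        (algebraMap R (Localization.AtPrime p.asIdeal)) := by
    rw [← ha, Ideal.span_le]
    rintro _ ⟨i, rfl⟩
    have hu := IsLocalization.map_units (Localization.AtPrime p.asIdeal) (s i)
    refine (Ideal.mul_unit_mem_iff_mem _ hu).1 ?_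
    rw [hys]
    exact Ideal.mem_map_of_mem _ (Ideal.subset_span ⟨i, rfl⟩)
  obtain ⟨t, ht, htx⟩ := (loc_mem p _ _).1 (hle (Ideal.mem_map_of_mem _ x.2))
  refine ⟨t, ht, Submodule.mem_sup_right ?_⟩
  have : (Ideal.span (Set.range fun i => (y i : R))) =
      (Submodule.span R ((Finset.univ.image y : Finset I) : Set I)).map (Submodule.subtype I) := by
    rw [Submodule.map_span]
    congr 1
    ext z
    simp
  rw [this] at htx
  obtain ⟨z, hz, hzx⟩ := htx
  have : z = t • x := Subtype.ext hzx
  rwa [← this]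

lemma lci_ind {J : Ideal R} {n : ℕ} (p : PrimeSpectrum R)
    (h : ∃ a : Fin n → Localization.AtPrime p.asIdeal, IsRegularSeq a ∧
      Ideal.span (Set.range a) = J.map (algebraMap R (Localization.AtPrime p.asIdeal)))
    (e : Fin n → R) (he : Ideal.span (Set.range e) ≤ J)
    (hs : ∀ x ∈ J, ∃ s, s ∉ p.asIdeal ∧ s * x ∈ Ideal.span (Set.range e))
    (r : Fin n → R) (hr : ∑ i, r i * e i ∈ J ^ 2) (i : Fin n) :
    ∃ s, s ∉ p.asIdeal ∧ s * r i ∈ J := by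
  obtain ⟨a, ha, haJ⟩ := h
  rw [← loc_mem]
  refine ind _ a ha haJ (fun i => algebraMap R _ (e i)) ?_ (fun i => algebraMap R _ (r i)) ?_ i
  · rw [Set.range_comp' , ← Ideal.map_span]
    exact le_antisymm (Ideal.map_mono he) (loc_le p _ _ hs)
  · rw [← Ideal.map_pow]
    simp only [← map_mul, ← map_sum]
    exact Ideal.mem_map_of_mem _ hr

lemma noChain (I : Ideal R) (h : ringKrullDim (R ⧸ I) ≤ 1) : NoChain I := by
  intro p q r hp hpq hqr
  rw [ringKrullDim_quotient] at h
  let a : PrimeSpectrum.zeroLocus (R := R) I := ⟨p, hp⟩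
  let b : PrimeSpectrum.zeroLocus (R := R) I := ⟨q, hp.trans hpq.le⟩
  let c : PrimeSpectrum.zeroLocus (R := R) I := ⟨r, hp.trans (hpq.le.trans hqr.le)⟩
  have hab : a < b := hpq
  have hbc : b < c := hqr
  rcases Order.krullDim_le_one_iff.1 h b with hb | hb
  · exact hb.not_lt hab
  · exact hb.not_lt hbc

lemma data1 [IsNoetherianRing R] (I : Ideal R) (m : ℕ) (hlci : IsLocallyCompleteIntersection I (m + 2))
    (hdim : NoChain I) : ∃ (f : Fin m → R) (u v w : R), Ideal.span (Set.range f) ≤ I ∧ u ∈ I ∧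
      v ∈ I ∧ w ∈ I ∧ ∀ p : PrimeSpectrum R, I ≤ p.asIdeal →
      (∃ s, s ∉ p.asIdeal ∧ ∀ x ∈ I, s * x ∈ Ideal.span (Set.range f) ⊔ Ideal.span {u, v}) ∨
      (∃ s, s ∉ p.asIdeal ∧ ∀ x ∈ I, s * x ∈ Ideal.span (Set.range f) ⊔ Ideal.span {u, w}) := by
  obtain ⟨h, hh⟩ := steps (M := I) hdim (m + 1) ⊥ (fun p hp => lci_LG p (hlci.2 p hp))
  obtain ⟨v, w, hvw⟩ := last_step (M := I) hdim _ hh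
  refine ⟨fun i => h i.castSucc, h (Fin.last m), v, w, ?_, (h _).2, v.2, w.2, ?_⟩
  · rw [Ideal.span_le]
    rintro _ ⟨i, rfl⟩
    exact (h _).2
  have key : ∀ (z x : I) (s : R),
      s • x ∈ (⊥ : Submodule R I) ⊔ Submodule.span R (Set.range h) ⊔ Submodule.span R {z} →
      s * (x : R) ∈ Ideal.span (Set.range fun i : Fin m => (h i.castSucc : R)) ⊔
        Ideal.span {(h (Fin.last m) : R), (z : R)} := by
    intro z x s hs
    rw [bot_sup_eq, ← Submodule.span_union] at hs
    have := Submodule.mem_map_of_mem (f := Submodule.subtype I) hs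
    rw [Submodule.map_span, ← Ideal.span] at this
    rw [← Ideal.span_union]
    refine Ideal.span_mono ?_ this
    rintro _ ⟨_, (⟨i, rfl⟩ | rfl), rfl⟩
    · induction i using Fin.lastCases with
      | last => simp
      | cast i => exact Or.inl ⟨i, rfl⟩
    · simp
  intro p hp
  refine (hvw p hp).imp ?_ ?_
  · rintro ⟨s, hs, h1⟩
    exact ⟨s, hs, fun x hx => key v ⟨x, hx⟩ s (h1 _)⟩
  · rintro ⟨s, hs, h1⟩
    exact ⟨s, hs, fun x hx => key w ⟨x, hx⟩ s (h1 _)⟩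

end E2
end FS

namespace FS
section E3
variable {R : Type*} [CommRing R]

lemma pair_left {F : Ideal R} {u v : R} : u ∈ F ⊔ Ideal.span {u, v} :=
  Ideal.mem_sup_right (Ideal.subset_span (by simp))

lemma pair_right {F : Ideal R} {u v : R} : v ∈ F ⊔ Ideal.span {u, v} :=
  Ideal.mem_sup_right (Ideal.subset_span (by simp))

lemma not_mem_of_not_le {I : Ideal R} {p : PrimeSpectrum R} (h : ¬ I ≤ p.asIdeal) :
    ∃ s, s ∉ p.asIdeal ∧ s ∈ I := by
  obtain ⟨s, hs, hsp⟩ := SetLike.not_le_iff_exists.1 h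
  exact ⟨s, hsp, hs⟩

/-- independence for two of the generators -/
lemma ind2 {I : Ideal R} {m : ℕ} (p : PrimeSpectrum R)
    (h : ∃ a : Fin (m + 2) → Localization.AtPrime p.asIdeal, IsRegularSeq a ∧
      Ideal.span (Set.range a) = I.map (algebraMap R (Localization.AtPrime p.asIdeal)))
    (f : Fin m → R) (hf : Ideal.span (Set.range f) ≤ I) (u v : R) (hu : u ∈ I) (hv : v ∈ I)
    (hs : ∃ s, s ∉ p.asIdeal ∧ ∀ x ∈ I, s * x ∈ Ideal.span (Set.range f) ⊔ Ideal.span {u, v})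
    (a b : R) (hab : a * u + b * v ∈ Ideal.span (Set.range f) ⊔ I ^ 2) :
    (∃ s, s ∉ p.asIdeal ∧ s * a ∈ I) ∧ (∃ s, s ∉ p.asIdeal ∧ s * b ∈ I) := by
  obtain ⟨y, hy, z, hz, hyz⟩ := Submodule.mem_sup.1 hab
  obtain ⟨c, hc⟩ := (Submodule.mem_span_range_iff_exists_fun R).1 hy
  obtain ⟨s, hs, h1⟩ := hs
  have key := lci_ind p h (ext2 f u v) (by
    rw [span_ext2]
    refine sup_le hf ?_
    rw [Ideal.span_le]
    rintro x (rfl | rfl)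
    · exact hu
    · exact hv) (fun x hx => ⟨s, hs, by rw [span_ext2]; exact h1 x hx⟩)
    (ext2 (fun i => - c i) a b) (by
      rw [sum_ext2]
      have : ∑ i, -c i * f i = - y := by
        rw [← hc]; simp
      rw [this]
      have : -y + a * u + b * v = z := by linear_combination -hyz
      rwa [this])
  constructor
  · simpa [ext2] using key (Fin.last m).castSucc
  · simpa [ext2] using key (Fin.last (m + 1))

lemma data2 [IsNoetherianRing R] (I : Ideal R) (m : ℕ)
    (hlci : IsLocallyCompleteIntersection I (m + 2)) (hdim : NoChain I) :
    ∃ (f : Fin m → R) (u v w α β γ δ : R), Ideal.span (Set.range f) ≤ I ∧ u ∈ I ∧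
      v ∈ I ∧ w ∈ I ∧ I ≤ Ideal.span (Set.range f) ⊔ Ideal.span {u, v, w} ⊔ I ^ 2 ∧
      α + δ = 1 ∧ α * δ - β * γ ∈ I ∧
      α * w - β * v ∈ Ideal.span (Set.range f) ⊔ I ^ 2 ∧
      δ * v - γ * w ∈ Ideal.span (Set.range f) ⊔ I ^ 2 := by
  obtain ⟨f, u, v, w, hf, hu, hv, hw, hp⟩ := data1 I m hlci hdim
  obtain ⟨F, hF⟩ : ∃ F, F = Ideal.span (Set.range f) := ⟨_, rfl⟩
  obtain ⟨Y, hY⟩ : ∃ Y, Y = F ⊔ I ^ 2 := ⟨_, rfl⟩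
  have hI2Y : I ^ 2 ≤ Y := by rw [hY]; exact le_sup_right
  have hFY : F ≤ Y := by rw [hY]; exact le_sup_left
  -- the coefficients
  have htop : (Y ⊔ Ideal.span {u, v}).colon {w} ⊔ (Y ⊔ Ideal.span {u, w}).colon {v} = ⊤ := by
    by_contra hne
    obtain ⟨M, hM, hLM⟩ := Ideal.exists_le_maximal _ hne
    rw [sup_le_iff] at hLM
    have hIM : I ≤ M := by
      intro x hx
      apply hLM.1
      rw [Submodule.mem_colon_singleton]
      exact Ideal.mem_sup_left (hI2Y (sq_mem hx hw))
    rcases hp ⟨M, hM.isPrime⟩ hIM with ⟨s, hs, h1⟩ | ⟨s, hs, h1⟩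
    · apply hs
      apply hLM.1
      rw [Submodule.mem_colon_singleton]
      exact SetLike.le_def.1 (sup_le_sup_right (hF ▸ hFY) _) (h1 w hw)
    · apply hs
      apply hLM.2
      rw [Submodule.mem_colon_singleton]
      exact SetLike.le_def.1 (sup_le_sup_right (hF ▸ hFY) _) (h1 v hv)
  obtain ⟨α, hα, δ, hδ, h1⟩ := Submodule.mem_sup.1 ((Ideal.eq_top_iff_one _).1 htop)
  rw [Submodule.mem_colon_singleton] at hα hδ
  obtain ⟨y1, hy1, z1, hz1, hα⟩ := Submodule.mem_sup.1 hα
  obtain ⟨y2, hy2, z2, hz2, hδ⟩ := Submodule.mem_sup.1 hδ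
  obtain ⟨s, β, rfl⟩ := Ideal.mem_span_pair.1 hz1
  obtain ⟨t, γ, rfl⟩ := Ideal.mem_span_pair.1 hz2
  rw [smul_eq_mul] at hα hδ
  have e1 : (α * δ - β * γ) * v - (γ * s + α * t) * u ∈ Y := by
    have : (α * δ - β * γ) * v - (γ * s + α * t) * u = α * y2 + γ * y1 := by
      linear_combination (-α) * hδ - γ * hα
    rw [this]
    exact add_mem (Ideal.mul_mem_left _ _ hy2) (Ideal.mul_mem_left _ _ hy1)
  have e2 : (α * δ - β * γ) * w - (δ * s + β * t) * u ∈ Y := by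
    have : (α * δ - β * γ) * w - (δ * s + β * t) * u = δ * y1 + β * y2 := by
      linear_combination (-δ) * hα - β * hδ
    rw [this]
    exact add_mem (Ideal.mul_mem_left _ _ hy1) (Ideal.mul_mem_left _ _ hy2)
  have loc : ∀ (p : PrimeSpectrum R) (hIp : I ≤ p.asIdeal) (v w D κ κ' : R) (hv : v ∈ I) (hw : w ∈ I)
      (h1 : D * v - κ * u ∈ Y) (h2 : D * w - κ' * u ∈ Y)
      (hs : ∃ s, s ∉ p.asIdeal ∧ ∀ x ∈ I, s * x ∈ Ideal.span (Set.range f) ⊔ Ideal.span {u, v}),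
      (∃ s, s ∉ p.asIdeal ∧ s * D ∈ I) ∧ (∃ s, s ∉ p.asIdeal ∧ s * κ ∈ I) ∧
      (∃ s, s ∉ p.asIdeal ∧ s * κ' ∈ I) := by
    intro p hIp v w D κ κ' hv hw h1 h2 hs
    obtain ⟨⟨s1, hs1, k1⟩, ⟨s2, hs2, k2⟩⟩ := ind2 p (hlci.2 p hIp) f hf u v hu hv hs (-κ) D (by
      rw [← hF, ← hY]
      have : -κ * u + D * v = D * v - κ * u := by ring
      rwa [this])
    obtain ⟨⟨s3, hs3, k3⟩, -⟩ := ind2 p (hlci.2 p hIp) f hf u v hu hv hs (s2 * κ') 0 (by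
      rw [← hF, ← hY]
      have : s2 * κ' * u + 0 * v = (s2 * D) * w - s2 * (D * w - κ' * u) := by ring
      rw [this]
      exact sub_mem (hI2Y (sq_mem k2 hw)) (Ideal.mul_mem_left _ _ h2))
    refine ⟨⟨s2, hs2, k2⟩, ⟨s1, hs1, ?_⟩, ⟨s3 * s2, ?_, by rwa [mul_assoc]⟩⟩
    · rwa [mul_neg, Ideal.neg_mem_iff] at k1
    · exact fun h => (p.isPrime.mem_or_mem h).elim hs3 hs2
  have loc' : ∀ p : PrimeSpectrum R, (∃ r, r ∉ p.asIdeal ∧ r * (α * δ - β * γ) ∈ I) ∧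
      (∃ r, r ∉ p.asIdeal ∧ r * (γ * s + α * t) ∈ I) ∧
      (∃ r, r ∉ p.asIdeal ∧ r * (δ * s + β * t) ∈ I) := by
    intro p
    by_cases hIp : I ≤ p.asIdeal
    · rcases hp p hIp with h | h
      · exact loc p hIp v w _ _ _ hv hw e1 e2 h
      · obtain ⟨a, b, c⟩ := loc p hIp w v _ _ _ hw hv e2 e1 h
        exact ⟨a, c, b⟩
    · obtain ⟨r, hr, hrI⟩ := not_mem_of_not_le hIp
      exact ⟨⟨r, hr, Ideal.mul_mem_right _ _ hrI⟩, ⟨r, hr, Ideal.mul_mem_right _ _ hrI⟩,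
        ⟨r, hr, Ideal.mul_mem_right _ _ hrI⟩⟩
  have hD := locglob I _ (fun p => (loc' p).1)
  have hκ1 := locglob I _ (fun p => (loc' p).2.1)
  have hκ2 := locglob I _ (fun p => (loc' p).2.2)
  refine ⟨f, u, v - t * u, w - s * u, α, β, γ, δ, hf, hu, sub_mem hv (Ideal.mul_mem_left _ _ hu),
    sub_mem hw (Ideal.mul_mem_left _ _ hu), ?_, h1, hD, ?_, ?_⟩
  · obtain ⟨E, hE⟩ : ∃ E, E = Ideal.span {u, v - t * u, w - s * u} := ⟨_, rfl⟩
    have huE : u ∈ E := by rw [hE]; exact Ideal.subset_span (by simp)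
    have hvE : v ∈ E := by
      have : v - t * u ∈ E := by rw [hE]; exact Ideal.subset_span (by simp)
      simpa using add_mem this (Ideal.mul_mem_left _ t huE)
    have hwE : w ∈ E := by
      have : w - s * u ∈ E := by rw [hE]; exact Ideal.subset_span (by simp)
      simpa using add_mem this (Ideal.mul_mem_left _ s huE)
    intro x hx
    rw [← hE]
    apply locglob
    intro p
    by_cases hIp : I ≤ p.asIdeal
    · rcases hp p hIp with ⟨r, hr, h⟩ | ⟨r, hr, h⟩
      · refine ⟨r, hr, Ideal.mem_sup_left (SetLike.le_def.1 (sup_le_sup_left ?_ _) (h x hx))⟩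
        rw [Ideal.span_le]
        rintro x (rfl | rfl)
        · exact huE
        · exact hvE
      · refine ⟨r, hr, Ideal.mem_sup_left (SetLike.le_def.1 (sup_le_sup_left ?_ _) (h x hx))⟩
        rw [Ideal.span_le]
        rintro x (rfl | rfl)
        · exact huE
        · exact hwE
    · obtain ⟨r, hr, hrI⟩ := not_mem_of_not_le hIp
      exact ⟨r, hr, Ideal.mem_sup_right (sq_mem hrI hx)⟩
  · rw [← hF, ← hY]
    have : α * (w - s * u) - β * (v - t * u) = y1 + (δ * s + β * t) * u := by
      linear_combination -hα - s * u * h1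
    rw [this]
    exact add_mem hy1 (hI2Y (sq_mem hκ2 hu))
  · rw [← hF, ← hY]
    have : δ * (v - t * u) - γ * (w - s * u) = y2 + (γ * s + α * t) * u := by
      linear_combination -hδ - t * u * h1
    rw [this]
    exact add_mem hy2 (hI2Y (sq_mem hκ1 hu))

end E3
end FS

namespace FS
section E4
variable {R : Type*} [CommRing R]

lemma gg1_mem (I : Ideal R) (α β γ δ u v w : R) (hu : u ∈ I) (hv : v ∈ I) (hw : w ∈ I) :
    gg1 α β γ δ u v w ∈ I := by
  have hP : γ * u - w ∈ I := sub_mem (Ideal.mul_mem_left _ _ hu) hw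
  unfold gg1
  refine sub_mem (add_mem (Ideal.mul_mem_left _ _ ?_) (Ideal.mul_mem_left _ _ ?_))
    (Ideal.mul_mem_left _ _ (Ideal.pow_mem_of_mem _ hP 2 (by norm_num)))
  · exact add_mem (Ideal.mul_mem_left _ _ hu) (Ideal.mul_mem_left _ _ hv)
  · exact add_mem (Ideal.mul_mem_left _ _ hu) (Ideal.mul_mem_left _ _ hw)

lemma gg2_mem (I : Ideal R) (α β γ δ u v w : R) (hu : u ∈ I) (hv : v ∈ I) (hw : w ∈ I) :
    gg2 α β γ δ u v w ∈ I := by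
  unfold gg2
  refine add_mem (add_mem (Ideal.mul_mem_left _ _ ?_) (Ideal.mul_mem_left _ _ ?_))
    (Ideal.mul_mem_left _ _ (Ideal.pow_mem_of_mem _ hu 2 (by norm_num)))
  · exact add_mem (Ideal.mul_mem_left _ _ hu) (Ideal.mul_mem_left _ _ hv)
  · exact add_mem (Ideal.mul_mem_left _ _ hu) (Ideal.mul_mem_left _ _ hw)

lemma map_gg1 {S : Type*} [CommRing S] (φ : R →+* S) (α β γ δ u v w : R) :
    φ (gg1 α β γ δ u v w) = gg1 (φ α) (φ β) (φ γ) (φ δ) (φ u) (φ v) (φ w) := by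
  have h3 : φ 3 = 3 := map_ofNat φ 3
  simp [gg1, h3]

lemma map_gg2 {S : Type*} [CommRing S] (φ : R →+* S) (α β γ δ u v w : R) :
    φ (gg2 α β γ δ u v w) = gg2 (φ α) (φ β) (φ γ) (φ δ) (φ u) (φ v) (φ w) := by
  have h3 : φ 3 = 3 := map_ofNat φ 3
  simp [gg2, h3]

lemma at_prime [IsNoetherianRing R] (I : Ideal R) (m : ℕ) (f : Fin m → R) (u v w α β γ δ : R)
    (hf : Ideal.span (Set.range f) ≤ I) (hu : u ∈ I) (hv : v ∈ I) (hw : w ∈ I)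
    (hgen : I ≤ Ideal.span (Set.range f) ⊔ Ideal.span {u, v, w} ⊔ I ^ 2)
    (h1 : α + δ = 1) (hD : α * δ - β * γ ∈ I)
    (hαw : α * w - β * v ∈ Ideal.span (Set.range f) ⊔ I ^ 2)
    (hδv : δ * v - γ * w ∈ Ideal.span (Set.range f) ⊔ I ^ 2)
    (p : PrimeSpectrum R) (hp : I ≤ p.asIdeal)
    (h : ∃ a : Fin (m + 2) → Localization.AtPrime p.asIdeal, IsRegularSeq a ∧
      Ideal.span (Set.range a) = I.map (algebraMap R (Localization.AtPrime p.asIdeal))) :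
    (I ^ 2).map (algebraMap R (Localization.AtPrime p.asIdeal)) ≤
      (Ideal.span (Set.range f) ⊔ Ideal.span {gg1 α β γ δ u v w, gg2 α β γ δ u v w}).map
        (algebraMap R (Localization.AtPrime p.asIdeal)) ∧
    ∃ a : Fin (m + 2) → Localization.AtPrime p.asIdeal, IsRegularSeq a ∧
      Ideal.span (Set.range a) =
      (Ideal.span (Set.range f) ⊔ Ideal.span {gg1 α β γ δ u v w, gg2 α β γ δ u v w}).map
        (algebraMap R (Localization.AtPrime p.asIdeal)) := by
  obtain ⟨c, hc, hcI⟩ := h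
  obtain ⟨φ, hφ⟩ : ∃ φ, φ = algebraMap R (Localization.AtPrime p.asIdeal) := ⟨_, rfl⟩
  rw [← hφ] at hcI ⊢
  have hne : I.map φ ≠ ⊤ := by
    rw [Ideal.ne_top_iff_one]
    intro h
    rw [← map_one φ, hφ, loc_mem] at h
    obtain ⟨s, hs, hsI⟩ := h
    rw [mul_one] at hsI
    exact hs (hp hsI)
  have hmF : (Ideal.span (Set.range f)).map φ = Ideal.span (Set.range fun i => φ (f i)) := by
    rw [Ideal.map_span, ← Set.range_comp]; rfl
  have hmap : (Ideal.span (Set.range f) ⊔ Ideal.span {gg1 α β γ δ u v w, gg2 α β γ δ u v w}).map φ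
      = Ideal.span (Set.range fun i => φ (f i)) ⊔
        Ideal.span {gg1 (φ α) (φ β) (φ γ) (φ δ) (φ u) (φ v) (φ w),
          gg2 (φ α) (φ β) (φ γ) (φ δ) (φ u) (φ v) (φ w)} := by
    rw [Ideal.map_sup, hmF, Ideal.map_span, Set.image_pair, map_gg1, map_gg2]
  have hY : (Ideal.span (Set.range f) ⊔ I ^ 2).map φ =
      Ideal.span (Set.range fun i => φ (f i)) ⊔ (I.map φ) ^ 2 := by
    rw [Ideal.map_sup, hmF, Ideal.map_pow]
  rw [hmap, Ideal.map_pow]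
  have hF' : Ideal.span (Set.range fun i => φ (f i)) ≤ I.map φ := by
    rw [← hmF]; exact Ideal.map_mono hf
  refine local_good (I.map φ) hne _ hF' c hc hcI _ _ ?_
  have hgen' : I.map φ ≤ Ideal.span (Set.range fun i => φ (f i)) ⊔ Ideal.span {φ u, φ v, φ w}
      ⊔ (I.map φ) ^ 2 := by
    have := Ideal.map_mono (f := φ) hgen
    rwa [Ideal.map_sup, Ideal.map_sup, hmF, Ideal.map_pow, Ideal.map_span, Set.image_insert_eq,
      Set.image_pair] at this
  have h1' : φ α + φ δ = 1 := by rw [← map_add, h1, map_one]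
  have hD' : φ α * φ δ - φ β * φ γ ∈ I.map φ := by
    simpa using Ideal.mem_map_of_mem φ hD
  have hαw' : φ α * φ w - φ β * φ v ∈ Ideal.span (Set.range fun i => φ (f i)) ⊔ (I.map φ) ^ 2 := by
    rw [← hY]; simpa using Ideal.mem_map_of_mem φ hαw
  have hδv' : φ δ * φ v - φ γ * φ w ∈ Ideal.span (Set.range fun i => φ (f i)) ⊔ (I.map φ) ^ 2 := by
    rw [← hY]; simpa using Ideal.mem_map_of_mem φ hδv
  rcases IsLocalRing.isUnit_or_isUnit_of_add_one h1' with hunit | hunit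
  · exact good1 _ _ hF' _ _ _ _ _ _ _ (Ideal.mem_map_of_mem _ hu) (Ideal.mem_map_of_mem _ hv)
      (Ideal.mem_map_of_mem _ hw) hgen' h1' hD' hαw' hunit
  · exact good2 _ _ hF' _ _ _ _ _ _ _ (Ideal.mem_map_of_mem _ hu) (Ideal.mem_map_of_mem _ hv)
      (Ideal.mem_map_of_mem _ hw) hgen' h1' hD' hδv' hunit

/-- If `J/J²` is locally freely generated by global elements then it is free. -/
lemma free_cot (J : Ideal R) {n : ℕ} (hJ : J ≠ ⊤)
    (h : ∀ p : PrimeSpectrum R, J ≤ p.asIdeal →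
      ∃ a : Fin n → Localization.AtPrime p.asIdeal, IsRegularSeq a ∧
      Ideal.span (Set.range a) = J.map (algebraMap R (Localization.AtPrime p.asIdeal)))
    (e : Fin n → R) (he : ∀ i, e i ∈ J)
    (hs : ∀ p : PrimeSpectrum R, J ≤ p.asIdeal → ∀ x ∈ J, ∃ s, s ∉ p.asIdeal ∧
      s * x ∈ Ideal.span (Set.range e)) :
    Module.Free (R ⧸ J) J.Cotangent ∧ Module.finrank (R ⧸ J) J.Cotangent = n := by
  have hle : Ideal.span (Set.range e) ≤ J := by
    rw [Ideal.span_le]; rintro _ ⟨i, rfl⟩; exact he i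
  have hind : ∀ r : Fin n → R, ∑ i, r i * e i ∈ J ^ 2 → ∀ i, r i ∈ J := by
    intro r hr i
    apply locglob
    intro p
    by_cases hp : J ≤ p.asIdeal
    · exact lci_ind p (h p hp) e hle (hs p hp) r hr i
    · obtain ⟨s, hs, hsJ⟩ := not_mem_of_not_le hp
      exact ⟨s, hs, Ideal.mul_mem_right _ _ hsJ⟩
  have hspan : ∀ x ∈ J, x ∈ Ideal.span (Set.range e) ⊔ J ^ 2 := by
    intro x hx
    apply locglob
    intro p
    by_cases hp : J ≤ p.asIdeal
    · obtain ⟨s, h1, h2⟩ := hs p hp x hx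
      exact ⟨s, h1, Ideal.mem_sup_left h2⟩
    · obtain ⟨s, hs, hsJ⟩ := not_mem_of_not_le hp
      exact ⟨s, hs, Ideal.mem_sup_right (sq_mem hsJ hx)⟩
  have : Nontrivial (R ⧸ J) := Ideal.Quotient.nontrivial_iff.2 hJ
  let b : Fin n → J.Cotangent := fun i => J.toCotangent ⟨e i, he i⟩
  have hsm : ∀ (r : R) (c : J.Cotangent), (Ideal.Quotient.mk J r) • c = r • c := fun r c => rfl
  have hli : LinearIndependent (R ⧸ J) b := by
    rw [Fintype.linearIndependent_iff]
    intro g hg i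
    choose r hr using fun i => Ideal.Quotient.mk_surjective (g i)
    rw [← hr, Ideal.Quotient.eq_zero_iff_mem]
    refine hind r ?_ i
    have : J.toCotangent (∑ i, r i • ⟨e i, he i⟩) = 0 := by
      rw [map_sum, ← hg]
      refine Finset.sum_congr rfl fun i _ => ?_
      rw [← hr, hsm, map_smul]
    rw [Ideal.toCotangent_eq_zero] at this
    simpa using this
  have hsp : ⊤ ≤ Submodule.span (R ⧸ J) (Set.range b) := by
    rintro c -
    obtain ⟨x, rfl⟩ := J.toCotangent_surjective c
    obtain ⟨y, hy, z, hz, hyz⟩ := Submodule.mem_sup.1 (hspan x x.2)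
    obtain ⟨r, hr⟩ := (Submodule.mem_span_range_iff_exists_fun R).1 hy
    have : J.toCotangent x = ∑ i, Ideal.Quotient.mk J (r i) • b i := by
      have h2 : ∑ i, Ideal.Quotient.mk J (r i) • b i =
          J.toCotangent (∑ i, r i • ⟨e i, he i⟩) := by
        rw [map_sum]
        refine Finset.sum_congr rfl fun i _ => ?_
        rw [hsm, map_smul]
      rw [h2, ← sub_eq_zero, ← map_sub, Ideal.toCotangent_eq_zero]
      have h3 : ((x - ∑ i, r i • (⟨e i, he i⟩ : J) : J) : R) = z := by
        have : ((∑ i, r i • (⟨e i, he i⟩ : J) : J) : R) = y := by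
          rw [← hr]; simp
        rw [Submodule.coe_sub, this, ← hyz]; ring
      rw [h3]; exact hz
    rw [this]
    exact Submodule.sum_mem _ fun i _ => Submodule.smul_mem _ _ (Submodule.subset_span ⟨i, rfl⟩)
  let B := Module.Basis.mk hli hsp
  exact ⟨Module.Free.of_basis B, by rw [Module.finrank_eq_card_basis B, Fintype.card_fin]⟩

lemma final [IsNoetherianRing R] (I : Ideal R) (m : ℕ)
    (hlci : IsLocallyCompleteIntersection I (m + 2)) (hdim : NoChain I) :
    ∃ J : Ideal R, IsLocallyCompleteIntersection J (m + 2) ∧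
      I.radical = J.radical ∧
      Module.Free (R ⧸ J) J.Cotangent ∧
      Module.finrank (R ⧸ J) J.Cotangent = (m + 2) := by
  obtain ⟨f, u, v, w, α, β, γ, δ, hf, hu, hv, hw, hgen, h1, hD, hαw, hδv⟩ := data2 I m hlci hdim
  have key := fun (p : PrimeSpectrum R) (hp : I ≤ p.asIdeal) =>
    at_prime I m f u v w α β γ δ hf hu hv hw hgen h1 hD hαw hδv p hp (hlci.2 p hp)
  have hg1 := gg1_mem I α β γ δ u v w hu hv hw
  have hg2 := gg2_mem I α β γ δ u v w hu hv hw
  generalize gg1 α β γ δ u v w = g1 at *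
  generalize gg2 α β γ δ u v w = g2 at *
  obtain ⟨K, hK⟩ : ∃ K, K = Ideal.span (Set.range f) ⊔ Ideal.span {g1, g2} := ⟨_, rfl⟩
  rw [← hK] at key
  have hKI : K ≤ I := by
    rw [hK]
    refine sup_le hf ?_
    rw [Ideal.span_le]
    rintro x (rfl | rfl)
    · exact hg1
    · exact hg2
  obtain ⟨J, hJ⟩ : ∃ J, J = K ⊔ I ^ 2 := ⟨_, rfl⟩
  have hI2J : I ^ 2 ≤ J := by rw [hJ]; exact le_sup_right
  have hKJ : K ≤ J := by rw [hJ]; exact le_sup_left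
  have hJI : J ≤ I := by rw [hJ]; exact sup_le hKI (Ideal.pow_le_self (by norm_num))
  have hiff : ∀ p : PrimeSpectrum R, J ≤ p.asIdeal ↔ I ≤ p.asIdeal := fun p =>
    ⟨fun h => p.isPrime.le_of_pow_le (hI2J.trans h), fun h => hJI.trans h⟩
  have hmapJ : ∀ p : PrimeSpectrum R, I ≤ p.asIdeal →
      K.map (algebraMap R (Localization.AtPrime p.asIdeal)) =
      J.map (algebraMap R (Localization.AtPrime p.asIdeal)) := by
    intro p hp
    rw [hJ, Ideal.map_sup, sup_eq_left.2 (key p hp).1]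
  have hJlci : ∀ p : PrimeSpectrum R, J ≤ p.asIdeal →
      ∃ a : Fin (m + 2) → Localization.AtPrime p.asIdeal, IsRegularSeq a ∧
      Ideal.span (Set.range a) = J.map (algebraMap R (Localization.AtPrime p.asIdeal)) := by
    intro p hp
    rw [hiff] at hp
    rw [← hmapJ p hp]
    exact (key p hp).2
  have hIne : I ≠ ⊤ := by
    rintro rfl
    have h := hlci.1
    have h2 : idealHeight (⊤ : Ideal R) = ⊤ := by
      unfold idealHeight
      rw [iInf_eq_top]
      intro p
      rw [iInf_eq_top]
      intro hp
      exact absurd (top_le_iff.1 hp) p.isPrime.ne_top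
    rw [h2] at h
    exact absurd h.symm (ENat.natCast_ne_top _)
  have hJne : J ≠ ⊤ := fun h => hIne (top_le_iff.1 (h ▸ hJI))
  refine ⟨J, ⟨?_, hJlci⟩, ?_, ?_⟩
  · rw [← hlci.1]
    unfold idealHeight
    simp only [hiff]
  · refine le_antisymm ?_ (Ideal.radical_mono hJI)
    have := Ideal.radical_mono hI2J
    rwa [Ideal.radical_pow _ (by norm_num)] at this
  · refine free_cot J hJne hJlci (ext2 f g1 g2) ?_ ?_
    · intro i
      apply hKJ
      rw [hK, ← span_ext2]
      exact Ideal.subset_span ⟨i, rfl⟩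
    · intro p hp x hx
      rw [span_ext2, ← hK, ← loc_mem, hmapJ p ((hiff p).1 hp)]
      exact Ideal.mem_map_of_mem _ hx

end E4
end FS

/-- **Theorem (Ferrand–Szpiro).**  Let `R` be a commutative Noetherian ring and `I` a
locally complete intersection ideal of `R` of height `n ≥ 2` with `dim (R/I) ≤ 1`.  Then
there is a locally complete intersection ideal `J ⊆ R` of height `n` such that
(i) `√I = √J` and (ii) `J/J²` is a free `R/J`-module of rank `n`. -/
theorem ferrand_szpiro
    (R : Type*) [CommRing R] [IsNoetherianRing R]
    (I : Ideal R) (n : ℕ) (hn : 2 ≤ n)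
    (hlci : IsLocallyCompleteIntersection I n)
    (hdim : ringKrullDim (R ⧸ I) ≤ 1) :
    ∃ J : Ideal R, IsLocallyCompleteIntersection J n ∧
      I.radical = J.radical ∧
      Module.Free (R ⧸ J) J.Cotangent ∧
      Module.finrank (R ⧸ J) J.Cotangent = n := by
  obtain ⟨m, rfl⟩ : ∃ m, n = m + 2 := ⟨n - 2, by omega⟩
  exact FS.final I m hlci (FS.noChain I hdim)
end
end

section
/- Let R be a commutative Noetherian ring and f ∈ R[T] a nonconstant polynomial (f ∉ R). Then: (i) for every proper ideal I of R[T, f^{-1}] (the localization of R[T] at powers of f), ht I = ht(I ∩ R[T]); (ii) for every proper ideal I of R[f, f^{-1}] (the localization at powers of f of the R-subalgebra of R[T] generated by f), ht I = ht(I ∩ R[f^{-1}]), where R[f^{-1}] denotes the R-subalgebra of R[f, f^{-1}] generated by f^{-1}. -/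
noncomputable section

theorem idealHeight_eq_height {A : Type*} [CommRing A] (I : Ideal A) :
    idealHeight I = I.height := by
  unfold idealHeight
  apply le_antisymm
  · rw [Ideal.height_eq_inf_minimalPrimes]
    refine le_iInf₂ fun J hJ => ?_
    have hp : J.IsPrime := hJ.isPrime
    refine (iInf₂_le (⟨J, hp⟩ : PrimeSpectrum A) hJ.1.2).trans ?_
    rw [← PrimeSpectrum.height_eq_orderHeight]
  · refine le_iInf₂ fun p hp => ?_
    rw [← PrimeSpectrum.height_eq_orderHeight]
    exact Ideal.height_mono hp

theorem idealHeight_comap_localization {B A : Type*} [CommRing B] [CommRing A] [Algebra B A]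
    (S : Submonoid B) [IsLocalization S A] (I : Ideal A) :
    idealHeight I = idealHeight (I.comap (algebraMap B A)) := by
  rw [idealHeight_eq_height, idealHeight_eq_height]
  exact (IsLocalization.height_under S I).symm

theorem isLocalization_adjoin_inv {R A : Type*} [CommRing R] [CommRing A] [Algebra R A]
    (u g : A) (hug : u * g = 1)
    (h : ∀ z : A, ∃ n : ℕ, z * u ^ n ∈ Algebra.adjoin R ({u} : Set A)) :
    IsLocalization (Submonoid.powers
      (⟨g, Algebra.self_mem_adjoin_singleton R g⟩ : Algebra.adjoin R ({g} : Set A))) A := by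
  have hgu : g * u = 1 := by rw [mul_comm, hug]
  have hg : g ∈ Algebra.adjoin R ({g} : Set A) := Algebra.self_mem_adjoin_singleton R g
  have key : ∀ b ∈ Algebra.adjoin R ({u} : Set A), ∃ n : ℕ,
      b * g ^ n ∈ Algebra.adjoin R ({g} : Set A) := by
    intro b hb
    induction hb using Algebra.adjoin_induction with
    | mem x hx =>
      rw [Set.mem_singleton_iff] at hx
      subst hx
      exact ⟨1, by rw [pow_one, hug]; exact one_mem _⟩
    | algebraMap r => exact ⟨0, by simp⟩
    | add x y _ _ hx hy =>
      obtain ⟨n, hn⟩ := hx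
      obtain ⟨m, hm⟩ := hy
      refine ⟨n + m, ?_⟩
      have e : (x + y) * g ^ (n + m) = (x * g ^ n) * g ^ m + (y * g ^ m) * g ^ n := by ring
      rw [e]
      exact add_mem (mul_mem hn (pow_mem hg _)) (mul_mem hm (pow_mem hg _))
    | mul x y _ _ hx hy =>
      obtain ⟨n, hn⟩ := hx
      obtain ⟨m, hm⟩ := hy
      refine ⟨n + m, ?_⟩
      have e : (x * y) * g ^ (n + m) = (x * g ^ n) * (y * g ^ m) := by ring
      rw [e]
      exact mul_mem hn hm
  rw [isLocalization_iff]
  refine ⟨?_, ?_, ?_⟩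
  · rintro ⟨_, n, rfl⟩
    rw [map_pow]
    exact (IsUnit.of_mul_eq_one u hgu).pow n
  · intro z
    obtain ⟨n, hn⟩ := h z
    obtain ⟨m, hm⟩ := key _ hn
    have hz : z * g ^ m ∈ Algebra.adjoin R ({g} : Set A) := by
      have e : z * g ^ m = (z * u ^ n * g ^ m) * g ^ n := by
        calc z * g ^ m = z * g ^ m * (u * g) ^ n := by rw [hug, one_pow, mul_one]
          _ = _ := by ring
      rw [e]
      exact mul_mem hm (pow_mem hg _)
    exact ⟨(⟨z * g ^ m, hz⟩, ⟨_, m, rfl⟩), rfl⟩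
  · intro x y hxy
    exact ⟨1, by rw [Subtype.ext hxy]⟩

/-- **Lemma.** Let `R` be a commutative Noetherian ring and `f ∈ R[T] \ R` a nonconstant
polynomial.  Then
(i) for every proper ideal `I` of `R[T, f⁻¹]`, `ht I = ht (I ∩ R[T])`;
(ii) for every proper ideal `I` of `R[f, f⁻¹]` (the localization at the powers of `f` of
the `R`-subalgebra of `R[T]` generated by `f`), `ht I = ht (I ∩ R[f⁻¹])`, where `R[f⁻¹]`
is the `R`-subalgebra generated by `f⁻¹`. -/
theorem height_of_contraction_overring
    (R : Type*) [CommRing R] [IsNoetherianRing R]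
    (f : Polynomial R) (hf : f ∉ Set.range (Polynomial.C : R → Polynomial R)) :
    (∀ (A : Type*) [CommRing A] [Algebra (Polynomial R) A] [IsLocalization.Away f A],
      ∀ I : Ideal A, I ≠ ⊤ →
        idealHeight I = idealHeight (I.comap (algebraMap (Polynomial R) A))) ∧
    (∀ (A' : Type*) [CommRing A'] [Algebra R A']
      [Algebra (↥(Algebra.adjoin R ({f} : Set (Polynomial R)))) A']
      [IsScalarTower R (↥(Algebra.adjoin R ({f} : Set (Polynomial R)))) A']
      [IsLocalization.Away
        (⟨f, Algebra.self_mem_adjoin_singleton R f⟩ :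
          ↥(Algebra.adjoin R ({f} : Set (Polynomial R)))) A'],
      ∀ I : Ideal A', I ≠ ⊤ →
        idealHeight I
          = idealHeight (I.comap
              (Algebra.adjoin R
                {IsLocalization.Away.invSelf
                  (S := A')
                  (⟨f, Algebra.self_mem_adjoin_singleton R f⟩ :
                    ↥(Algebra.adjoin R ({f} : Set (Polynomial R))))}).val)) := by
  refine ⟨?_, ?_⟩
  · intro A _ _ _ I _
    exact idealHeight_comap_localization (Submonoid.powers f) I
  · intro A' _ _ _ _ _ I _
    set f' : ↥(Algebra.adjoin R ({f} : Set (Polynomial R))) :=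
      ⟨f, Algebra.self_mem_adjoin_singleton R f⟩ with hf'
    have hloc := isLocalization_adjoin_inv (R := R)
      (algebraMap (↥(Algebra.adjoin R ({f} : Set (Polynomial R)))) A' f')
      (IsLocalization.Away.invSelf (S := A') f')
      (IsLocalization.Away.mul_invSelf f') (by
        intro z
        obtain ⟨⟨b, ⟨_, n, rfl⟩⟩, hb⟩ := IsLocalization.surj (Submonoid.powers f') z
        refine ⟨n, ?_⟩
        simp only [map_pow] at hb
        rw [hb]
        have hmem : ∀ (p : Polynomial R) (hp : p ∈ Algebra.adjoin R ({f} : Set (Polynomial R))),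
            algebraMap (↥(Algebra.adjoin R ({f} : Set (Polynomial R)))) A' ⟨p, hp⟩ ∈
              Algebra.adjoin R
                ({algebraMap (↥(Algebra.adjoin R ({f} : Set (Polynomial R)))) A' f'} :
                  Set A') := by
          intro p hp
          induction hp using Algebra.adjoin_induction with
          | mem x hx =>
            rw [Set.mem_singleton_iff] at hx
            subst hx
            exact Algebra.self_mem_adjoin_singleton R _
          | algebraMap r =>
            have := Subalgebra.algebraMap_mem (Algebra.adjoin R
                ({algebraMap (↥(Algebra.adjoin R ({f} : Set (Polynomial R)))) A' f'} :
                  Set A')) r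
            rw [IsScalarTower.algebraMap_apply R
              (↥(Algebra.adjoin R ({f} : Set (Polynomial R)))) A'] at this
            exact this
          | add x y hx hy h1 h2 =>
            have := add_mem h1 h2
            rw [← map_add] at this
            exact this
          | mul x y hx hy h1 h2 =>
            have := mul_mem h1 h2
            rw [← map_mul] at this
            exact this
        exact hmem b.1 b.2)
    exact @idealHeight_comap_localization _ _ _ _ _ _ hloc I
end
end
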